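/- arXiv:1311.3167 — 11 statements merged into one kernel-verified Lean document; each statement's English description precedes it below -/
import Mathlib

section
/- Let t₁, t₂, t₃ be matrices satisfying the su(2) commutation relations, and let Ω = {x ∈ ℝ⁴ : x₄ > 0}. Then the pair A ≡ 0 and φ given by φ_a(x) = x₄⁻¹ · t_a for a = 1,2,3 and φ₄ ≡ 0 satisfies the KW equations on Ω: for all i,j ∈ {1,2,3,4} and all x ∈ Ω, F_{ij}(x) − [φ_i(x), φ_j(x)] + Σ_{k,l} ε_{ijkl} D_k φ_l(x) = 0, and Σ_{i=1}^{4} D_i φ_i(x) = 0. -/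
attribute [local instance] Matrix.normedAddCommGroup Matrix.normedSpace

/-- The Levi-Civita symbol on four indices, with `ε₀₁₂₃ = 1`. -/
noncomputable def eps4 (i j k l : Fin 4) : ℂ :=
  ((((l.val : ℤ) - (k.val : ℤ)) * ((l.val : ℤ) - (j.val : ℤ)) * ((l.val : ℤ) - (i.val : ℤ)) *
      ((k.val : ℤ) - (j.val : ℤ)) * ((k.val : ℤ) - (i.val : ℤ)) *
      ((j.val : ℤ) - (i.val : ℤ)) : ℤ) : ℂ) / 12

/-- Partial derivative in the `i`-th coordinate direction of a matrix-valued function on `ℝ⁴`. -/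
noncomputable def pd4 {n : ℕ} (i : Fin 4) (f : (Fin 4 → ℝ) → Matrix (Fin n) (Fin n) ℂ)
    (x : Fin 4 → ℝ) : Matrix (Fin n) (Fin n) ℂ :=
  deriv (fun t => f (Function.update x i t)) (x i)

/-- The curvature `F_{ij} = ∂_i A_j − ∂_j A_i + [A_i, A_j]`. -/
noncomputable def curv {n : ℕ} (A : (Fin 4 → ℝ) → Fin 4 → Matrix (Fin n) (Fin n) ℂ)
    (i j : Fin 4) (x : Fin 4 → ℝ) : Matrix (Fin n) (Fin n) ℂ :=
  pd4 i (fun x => A x j) x - pd4 j (fun x => A x i) x + (A x i * A x j - A x j * A x i)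

/-- The covariant derivative `D_i φ_j = ∂_i φ_j + [A_i, φ_j]`. -/
noncomputable def covD {n : ℕ} (A φ : (Fin 4 → ℝ) → Fin 4 → Matrix (Fin n) (Fin n) ℂ)
    (i j : Fin 4) (x : Fin 4 → ℝ) : Matrix (Fin n) (Fin n) ℂ :=
  pd4 i (fun x => φ x j) x + (A x i * φ x j - φ x j * A x i)

theorem pd4_const {n : ℕ} (i : Fin 4) (M : Matrix (Fin n) (Fin n) ℂ) (x : Fin 4 → ℝ) :
    pd4 i (fun _ => M) x = 0 :=
  deriv_const _ _

theorem pd4_inv_smul_of_ne {n : ℕ} {i : Fin 4} (hi : i ≠ 3) (M : Matrix (Fin n) (Fin n) ℂ)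
    (x : Fin 4 → ℝ) : pd4 i (fun y => ((y 3 : ℂ))⁻¹ • M) x = 0 := by
  simp only [pd4, Function.update_of_ne hi.symm]
  exact deriv_const _ _

theorem pd4_inv_smul {n : ℕ} (M : Matrix (Fin n) (Fin n) ℂ) {x : Fin 4 → ℝ} (hx : x 3 ≠ 0) :
    pd4 3 (fun y => ((y 3 : ℂ))⁻¹ • M) x = -(((x 3 : ℂ))⁻¹ * ((x 3 : ℂ))⁻¹) • M := by
  have h : HasDerivAt (fun s : ℝ => ((s : ℂ))⁻¹) (-(((x 3 : ℂ))⁻¹ * ((x 3 : ℂ))⁻¹)) (x 3) := by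
    convert (hasDerivAt_inv (Complex.ofReal_ne_zero.mpr hx)).comp_ofReal using 1
    rw [sq, mul_inv]
  simp only [pd4, Function.update_self]
  exact (h.smul_const M).deriv

/-- The Nahm pole solution `A = 0`, `φ_a = t_a/x₄` (a = 1,2,3), `φ₄ = 0` satisfies the
KW equations on the half-space `x₄ > 0`. -/
theorem nahm_pole_solves_KW {n : ℕ} (t : Fin 3 → Matrix (Fin n) (Fin n) ℂ)
    (h12 : t 0 * t 1 - t 1 * t 0 = t 2)
    (h23 : t 1 * t 2 - t 2 * t 1 = t 0)
    (h31 : t 2 * t 0 - t 0 * t 2 = t 1)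
    (A φ : (Fin 4 → ℝ) → Fin 4 → Matrix (Fin n) (Fin n) ℂ)
    (hA : ∀ x i, A x i = 0)
    (hφ : ∀ x i, φ x i = if h : (i : ℕ) < 3 then ((x 3 : ℂ))⁻¹ • t ⟨i, h⟩ else 0) :
    ∀ x : Fin 4 → ℝ, 0 < x 3 →
      (∀ i j : Fin 4,
        curv A i j x - (φ x i * φ x j - φ x j * φ x i)
          + ∑ k, ∑ l, eps4 i j k l • covD A φ k l x = 0)
      ∧ ∑ i, covD A φ i i x = 0 := by
  intro x hx
  have hφ₀ : ∀ y, φ y 0 = ((y 3 : ℂ))⁻¹ • t 0 := fun y => hφ y 0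
  have hφ₁ : ∀ y, φ y 1 = ((y 3 : ℂ))⁻¹ • t 1 := fun y => hφ y 1
  have hφ₂ : ∀ y, φ y 2 = ((y 3 : ℂ))⁻¹ • t 2 := fun y => hφ y 2
  have hφ₃ : ∀ y, φ y 3 = 0 := fun y => hφ y 3
  have hcurv : ∀ i j, curv A i j x = 0 := by simp [curv, hA, pd4_const]
  have hcov : ∀ k l, covD A φ k l x = pd4 k (fun y => φ y l) x := by simp [covD, hA]
  have hne : ∀ k : Fin 4, k ≠ 3 → ∀ l, covD A φ k l x = 0 := by
    intro k hk l
    rw [hcov]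
    fin_cases l <;> simp [hφ₀, hφ₁, hφ₂, hφ₃, pd4_inv_smul_of_ne hk, pd4_const]
  have hcov₀ := hne 0 (by decide)
  have hcov₁ := hne 1 (by decide)
  have hcov₂ := hne 2 (by decide)
  have hcov₃₀ : covD A φ 3 0 x = -(((x 3 : ℂ))⁻¹ * ((x 3 : ℂ))⁻¹) • t 0 := by
    simp only [hcov, hφ₀, pd4_inv_smul _ hx.ne']
  have hcov₃₁ : covD A φ 3 1 x = -(((x 3 : ℂ))⁻¹ * ((x 3 : ℂ))⁻¹) • t 1 := by
    simp only [hcov, hφ₁, pd4_inv_smul _ hx.ne']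
  have hcov₃₂ : covD A φ 3 2 x = -(((x 3 : ℂ))⁻¹ * ((x 3 : ℂ))⁻¹) • t 2 := by
    simp only [hcov, hφ₂, pd4_inv_smul _ hx.ne']
  have hcov₃₃ : covD A φ 3 3 x = 0 := by simp only [hcov, hφ₃, pd4_const]
  refine ⟨fun i j => ?_, by simp [Fin.sum_univ_four, hcov₀, hcov₁, hcov₂, hcov₃₃]⟩
  simp only [hcurv, Fin.sum_univ_four, hcov₀, hcov₁, hcov₂, hcov₃₀, hcov₃₁, hcov₃₂, hcov₃₃]
  have h21 : t 1 * t 0 - t 0 * t 1 = -t 2 := by rw [← h12, neg_sub]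
  have h32 : t 2 * t 1 - t 1 * t 2 = -t 0 := by rw [← h23, neg_sub]
  have h13 : t 0 * t 2 - t 2 * t 0 = -t 1 := by rw [← h31, neg_sub]
  fin_cases i <;> fin_cases j <;>
    simp [eps4, hφ₀, hφ₁, hφ₂, hφ₃, smul_smul, ← smul_sub, h12, h23, h31, h21, h32, h13]
end

section
/- Let I ⊆ ℝ be open and let φ₁, φ₂, φ₃, A_y : I → Matrix (Fin n) (Fin n) ℂ be differentiable. Set D_yφ_a := φ_a′ + [A_y, φ_a] and W_a := D_yφ_a + (1/2) Σ_{b,c} ε_{abc} [φ_b, φ_c]. Then at every point of I: Σ_{a=1}^{3} tr((D_yφ_a)²) + (1/2) Σ_{a,b=1}^{3} tr([φ_a,φ_b]²) = Σ_{a=1}^{3} tr(W_a²) − (1/3) · d/dy ( Σ_{a,b,c=1}^{3} ε_{abc} tr(φ_a [φ_b, φ_c]) ). (This is the Weitzenbock-type rearrangement adapted to the Nahm pole: the cubic boundary term is exactly a total derivative.) -/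
attribute [local instance] Matrix.normedAddCommGroup Matrix.normedSpace

/-- The Levi-Civita symbol on three indices, with `ε₀₁₂ = 1`. -/
noncomputable def eps3 (a b c : Fin 3) : ℂ :=
  ((((c.val : ℤ) - (b.val : ℤ)) * ((c.val : ℤ) - (a.val : ℤ)) *
      ((b.val : ℤ) - (a.val : ℤ)) : ℤ) : ℂ) / 2

/-- The covariant `y`-derivative `D_yφ_a = φ_a' + [A_y, φ_a]`. -/
noncomputable def Dy {n : ℕ} (Ay : ℝ → Matrix (Fin n) (Fin n) ℂ)
    (φ : Fin 3 → ℝ → Matrix (Fin n) (Fin n) ℂ) (a : Fin 3) (y : ℝ) :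
    Matrix (Fin n) (Fin n) ℂ :=
  deriv (φ a) y + (Ay y * φ a y - φ a y * Ay y)

/-- `W_a = D_yφ_a + (1/2) Σ_{b,c} ε_{abc} [φ_b, φ_c]`. -/
noncomputable def Wop {n : ℕ} (Ay : ℝ → Matrix (Fin n) (Fin n) ℂ)
    (φ : Fin 3 → ℝ → Matrix (Fin n) (Fin n) ℂ) (a : Fin 3) (y : ℝ) :
    Matrix (Fin n) (Fin n) ℂ :=
  Dy Ay φ a y + (1 / 2 : ℂ) • ∑ b, ∑ c, eps3 a b c • (φ b y * φ c y - φ c y * φ b y)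

open Matrix

theorem HasDerivAt.matrix_mul {m : Type*} [Fintype m] {f g : ℝ → Matrix m m ℂ}
    {f' g' : Matrix m m ℂ} {y : ℝ} (hf : HasDerivAt f f' y) (hg : HasDerivAt g g' y) :
    HasDerivAt (fun t => f t * g t) (f' * g y + f y * g') y := by
  refine hasDerivAt_pi.2 fun i => hasDerivAt_pi.2 fun j => ?_
  have entry {h : ℝ → Matrix m m ℂ} {h' : Matrix m m ℂ} (hh : HasDerivAt h h' y) (i j : m) :
      HasDerivAt (fun t => h t i j) (h' i j) y :=
    hasDerivAt_pi.1 (hasDerivAt_pi.1 hh i) j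
  simp only [Matrix.add_apply, Matrix.mul_apply, ← Finset.sum_add_distrib]
  exact HasDerivAt.fun_sum fun k _ => (entry hf i k).mul (entry hg k j)

theorem HasDerivAt.matrix_trace {m : Type*} [Fintype m] {f : ℝ → Matrix m m ℂ}
    {f' : Matrix m m ℂ} {y : ℝ} (hf : HasDerivAt f f' y) :
    HasDerivAt (fun t => (f t).trace) f'.trace y :=
  HasDerivAt.fun_sum fun i _ => hasDerivAt_pi.1 (hasDerivAt_pi.1 hf i) i

/-- Contraction with the Levi-Civita symbol is the signed sum over permutations. -/
theorem sum_eps3_smul {M : Type*} [AddCommGroup M] [Module ℂ M] (F : Fin 3 → Fin 3 → Fin 3 → M) :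
    ∑ a, ∑ b, ∑ c, eps3 a b c • F a b c =
      F 0 1 2 - F 0 2 1 + (F 1 2 0 - F 1 0 2) + (F 2 0 1 - F 2 1 0) := by
  simp [Fin.sum_univ_three, eps3]
  norm_num
  module

/-- The trace form applied to a cubic commutator is invariant under cyclic rotation. -/
theorem trace_mul_commutator_rotate {m : Type*} [Fintype m] (X Y Z : Matrix m m ℂ) :
    (X * (Y * Z - Z * Y)).trace = (Y * (Z * X - X * Z)).trace := by
  simp only [mul_sub, trace_sub, ← mul_assoc]
  rw [trace_mul_cycle X Y Z, trace_mul_cycle Z X Y, trace_mul_cycle X Z Y, trace_mul_cycle Y X Z]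

/-- Invariance of the cubic form `tr (X [Y, Z])` under the adjoint action of `A`. -/
theorem trace_adjoint_invariance {m : Type*} [Fintype m] (A X Y Z : Matrix m m ℂ) :
    ((A * X - X * A) * (Y * Z - Z * Y)).trace + ((A * Y - Y * A) * (Z * X - X * Z)).trace
      + ((A * Z - Z * A) * (X * Y - Y * X)).trace = 0 := by
  have key (U V : Matrix m m ℂ) :
      ((A * U - U * A) * V).trace = (A * (U * V - V * U)).trace := by
    simp only [mul_sub, sub_mul, trace_sub, ← mul_assoc]
    rw [trace_mul_cycle U A V, trace_mul_cycle V U A]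
  rw [key, key, key, ← trace_add, ← trace_add, ← mul_add, ← mul_add]
  convert trace_zero m ℂ
  noncomm_ring

theorem trace_add_mul_self {m : Type*} [Fintype m] (D C : Matrix m m ℂ) :
    ((D + C) * (D + C)).trace = (D * D).trace + 2 * (D * C).trace + (C * C).trace := by
  simp only [mul_add, add_mul, trace_add, trace_mul_comm C D]
  ring

theorem Wop_zero {n : ℕ} (Ay : ℝ → Matrix (Fin n) (Fin n) ℂ)
    (φ : Fin 3 → ℝ → Matrix (Fin n) (Fin n) ℂ) (y : ℝ) :
    Wop Ay φ 0 y = Dy Ay φ 0 y + (φ 1 y * φ 2 y - φ 2 y * φ 1 y) := by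
  simp [Wop, Fin.sum_univ_three, eps3]
  module

theorem Wop_one {n : ℕ} (Ay : ℝ → Matrix (Fin n) (Fin n) ℂ)
    (φ : Fin 3 → ℝ → Matrix (Fin n) (Fin n) ℂ) (y : ℝ) :
    Wop Ay φ 1 y = Dy Ay φ 1 y + (φ 2 y * φ 0 y - φ 0 y * φ 2 y) := by
  simp [Wop, Fin.sum_univ_three, eps3]
  module

theorem Wop_two {n : ℕ} (Ay : ℝ → Matrix (Fin n) (Fin n) ℂ)
    (φ : Fin 3 → ℝ → Matrix (Fin n) (Fin n) ℂ) (y : ℝ) :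
    Wop Ay φ 2 y = Dy Ay φ 2 y + (φ 0 y * φ 1 y - φ 1 y * φ 0 y) := by
  simp [Wop, Fin.sum_univ_three, eps3]
  module

/-- The fully contracted cubic term is six times a single trace. -/
theorem sum_eps3_mul_trace {m : Type*} [Fintype m] (X : Fin 3 → Matrix m m ℂ) :
    ∑ a, ∑ b, ∑ c, eps3 a b c * (X a * (X b * X c - X c * X b)).trace =
      6 * (X 0 * (X 1 * X 2 - X 2 * X 1)).trace := by
  have anti (a b c : Fin 3) : (X a * (X c * X b - X b * X c)).trace =
      -(X a * (X b * X c - X c * X b)).trace := by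
    rw [← neg_sub, mul_neg, trace_neg]
  simp only [← smul_eq_mul (a := eps3 _ _ _)]
  rw [sum_eps3_smul, anti 0 1 2, anti 1 2 0, anti 2 0 1,
    ← trace_mul_commutator_rotate (X 1) (X 2) (X 0), ← trace_mul_commutator_rotate (X 0) (X 1) (X 2)]
  ring

theorem hasDerivAt_trace_mul_commutator {m : Type*} [Fintype m] {f g h : ℝ → Matrix m m ℂ}
    {f' g' h' : Matrix m m ℂ} {y : ℝ} (hf : HasDerivAt f f' y) (hg : HasDerivAt g g' y)
    (hh : HasDerivAt h h' y) :
    HasDerivAt (fun t => (f t * (g t * h t - h t * g t)).trace)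
      ((f' * (g y * h y - h y * g y)).trace + (g' * (h y * f y - f y * h y)).trace
        + (h' * (f y * g y - g y * f y)).trace) y := by
  convert (hf.matrix_mul
    ((hg.matrix_mul hh).fun_sub (hh.matrix_mul hg))).matrix_trace using 1
  rw [trace_mul_commutator_rotate h', trace_mul_commutator_rotate g',
    trace_mul_commutator_rotate (h y)]
  simp only [mul_sub, mul_add, trace_add, trace_sub]
  ring

/-- The Weitzenbock-type rearrangement adapted to the Nahm pole: the difference between
`Σ tr((D_yφ_a)²) + (1/2) Σ tr([φ_a,φ_b]²)` and `Σ tr(W_a²)` is exactly a total derivative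
of the cubic term `−(1/3) Σ ε_{abc} tr(φ_a[φ_b,φ_c])`. -/
theorem weitzenbock_rearrangement {n : ℕ} (I : Set ℝ) (hI : IsOpen I)
    (φ : Fin 3 → ℝ → Matrix (Fin n) (Fin n) ℂ) (Ay : ℝ → Matrix (Fin n) (Fin n) ℂ)
    (hφ : ∀ a, ∀ y ∈ I, DifferentiableAt ℝ (φ a) y)
    (hA : ∀ y ∈ I, DifferentiableAt ℝ Ay y) :
    ∀ y ∈ I,
      (∑ a, Matrix.trace (Dy Ay φ a y * Dy Ay φ a y))
        + (1 / 2 : ℂ) * ∑ a, ∑ b,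
            Matrix.trace ((φ a y * φ b y - φ b y * φ a y) *
              (φ a y * φ b y - φ b y * φ a y))
      = (∑ a, Matrix.trace (Wop Ay φ a y * Wop Ay φ a y))
        - (1 / 3 : ℂ) * deriv (fun y => ∑ a, ∑ b, ∑ c,
            eps3 a b c * Matrix.trace (φ a y * (φ b y * φ c y - φ c y * φ b y))) y := by
  intro y hy
  have hd (a : Fin 3) : HasDerivAt (φ a) (deriv (φ a) y) y := (hφ a y hy).hasDerivAt
  have hcubic := ((hasDerivAt_trace_mul_commutator (hd 0) (hd 1) (hd 2)).const_mul (6 : ℂ)).deriv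
  have hfun : (fun y => ∑ a, ∑ b, ∑ c,
      eps3 a b c * Matrix.trace (φ a y * (φ b y * φ c y - φ c y * φ b y))) =
      fun y => 6 * (φ 0 y * (φ 1 y * φ 2 y - φ 2 y * φ 1 y)).trace :=
    funext fun t => sum_eps3_mul_trace fun a => φ a t
  have hsq (X Y : Matrix (Fin n) (Fin n) ℂ) :
      ((Y * X - X * Y) * (Y * X - X * Y)).trace = ((X * Y - Y * X) * (X * Y - Y * X)).trace := by
    rw [← neg_sub, neg_mul_neg]
  have hinv := trace_adjoint_invariance (Ay y) (φ 0 y) (φ 1 y) (φ 2 y)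
  have hDy (a : Fin 3) (C : Matrix (Fin n) (Fin n) ℂ) : (Dy Ay φ a y * C).trace =
      (deriv (φ a) y * C).trace + ((Ay y * φ a y - φ a y * Ay y) * C).trace := by
    rw [Dy, add_mul, trace_add]
  rw [hfun, hcubic]
  simp only [Fin.sum_univ_three, Wop_zero, Wop_one, Wop_two, trace_add_mul_self, sub_self,
    mul_zero, trace_zero]
  rw [hsq (φ 0 y) (φ 1 y), hsq (φ 1 y) (φ 2 y), hsq (φ 2 y) (φ 0 y),
    hDy 0 (φ 1 y * φ 2 y - φ 2 y * φ 1 y), hDy 1 (φ 2 y * φ 0 y - φ 0 y * φ 2 y),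
    hDy 2 (φ 0 y * φ 1 y - φ 1 y * φ 0 y)]
  linear_combination -2 * hinv
end

section
/- Assume the su(2) endomorphism triple setup with Casimir parameter j, where j is a real number with j > 0. Let φ ∈ V, λ ∈ ℂ, and set a_a := −(λ/(j(j+1))) · T_a(φ) for a = 1,2,3. If φ ≠ 0, then the indicial equations λ·a_a + T_a(φ) − Σ_{b,c} ε_{abc} T_b(a_c) = 0 (for a = 1,2,3) and λ·φ − Σ_{a} T_a(a_a) = 0 hold if and only if λ² − λ − j(j+1) = 0, that is, if and only if λ = j+1 or λ = −j. -/
/-- The curl `∑ ε_{ibc} T_b T_c` of an su(2) triple is `T_i`. -/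
theorem sum_eps3_smul_apply_apply {V : Type*} [AddCommGroup V] [Module ℂ V]
    (T : Fin 3 → Module.End ℂ V)
    (h12 : T 0 * T 1 - T 1 * T 0 = T 2)
    (h23 : T 1 * T 2 - T 2 * T 1 = T 0)
    (h31 : T 2 * T 0 - T 0 * T 2 = T 1) (v : V) (i : Fin 3) :
    ∑ b, ∑ c, eps3 i b c • T b (T c v) = T i v := by
  have h12v := LinearMap.congr_fun h12 v
  have h23v := LinearMap.congr_fun h23 v
  have h31v := LinearMap.congr_fun h31 v
  simp only [LinearMap.sub_apply, Module.End.mul_apply] at h12v h23v h31v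
  fin_cases i
  · simp only [Fin.zero_eta, Fin.sum_univ_three, eps3]
    norm_num
    rw [← h23v]
    abel
  · simp only [Fin.mk_one, Fin.sum_univ_three, eps3]
    norm_num
    rw [← h31v]
    abel
  · simp only [Fin.reduceFinMk, Fin.sum_univ_three, eps3]
    norm_num
    rw [← h12v]
    abel

/-- For an su(2) endomorphism triple with Casimir parameter `j > 0`, the indicial equations
in the `(a_a, φ_y)` sector, with `a_a = −(λ/(j(j+1))) T_a(φ)` and `φ ≠ 0`, hold if and only
if `λ² − λ − j(j+1) = 0`, i.e. if and only if `λ = j+1` or `λ = −j`. -/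
theorem indicial_equation_iff {V : Type*} [AddCommGroup V] [Module ℂ V]
    (T : Fin 3 → Module.End ℂ V)
    (h12 : T 0 * T 1 - T 1 * T 0 = T 2)
    (h23 : T 1 * T 2 - T 2 * T 1 = T 0)
    (h31 : T 2 * T 0 - T 0 * T 2 = T 1)
    (j : ℝ) (hj : 0 < j)
    (hcas : T 0 ^ 2 + T 1 ^ 2 + T 2 ^ 2
      = -(((j * (j + 1) : ℝ) : ℂ)) • (1 : Module.End ℂ V))
    (φ : V) (hφ : φ ≠ 0) (lam : ℂ) (a : Fin 3 → V)
    (ha : ∀ i, a i = -(lam / ((j * (j + 1) : ℝ) : ℂ)) • T i φ) :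
    (((∀ i, lam • a i + T i φ - ∑ b, ∑ c, eps3 i b c • T b (a c) = 0) ∧
        lam • φ - ∑ i, T i (a i) = 0)
      ↔ lam ^ 2 - lam - ((j * (j + 1) : ℝ) : ℂ) = 0)
    ∧ (lam ^ 2 - lam - ((j * (j + 1) : ℝ) : ℂ) = 0
      ↔ (lam = (j : ℂ) + 1 ∨ lam = -(j : ℂ))) := by
  have hc : ((j * (j + 1) : ℝ) : ℂ) ≠ 0 := by
    exact_mod_cast (by positivity : j * (j + 1) ≠ 0)
  refine ⟨?_, ?_⟩
  · generalize ((j * (j + 1) : ℝ) : ℂ) = c at *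
    have hcasφ : ∑ i, T i (T i φ) = -c • φ := by
      simpa [Fin.sum_univ_three, pow_two] using LinearMap.congr_fun hcas φ
    have hvector (i : Fin 3) : lam • a i + T i φ - ∑ b, ∑ d, eps3 i b d • T b (a d)
        = (-(lam ^ 2 - lam - c) / c) • T i φ := by
      have hcurl : ∑ b, ∑ d, eps3 i b d • T b (a d) = -(lam / c) • T i φ := by
        rw [← sum_eps3_smul_apply_apply T h12 h23 h31 φ i]
        simp only [ha, map_smul, Finset.smul_sum, smul_comm (-(lam / c))]
      rw [hcurl, ha]
      match_scalars
      field_simp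
      ring
    have hscalar : lam • φ - ∑ i, T i (a i) = 0 := by
      simp only [ha, map_smul, ← Finset.smul_sum, hcasφ]
      match_scalars
      field_simp
      ring
    constructor
    · rintro ⟨h, -⟩
      by_contra hne
      have hT (i : Fin 3) : T i φ = 0 :=
        (smul_eq_zero.mp ((hvector i).symm.trans (h i))).resolve_left
          (div_ne_zero (neg_ne_zero.mpr hne) hc)
      simp only [hT, map_zero, Finset.sum_const_zero] at hcasφ
      exact (smul_ne_zero (neg_ne_zero.mpr hc) hφ) hcasφ.symm
    · intro h
      exact ⟨fun i => by rw [hvector, h]; simp, hscalar⟩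
  · have hfactor : lam ^ 2 - lam - ((j * (j + 1) : ℝ) : ℂ)
        = (lam - ((j : ℂ) + 1)) * (lam - -(j : ℂ)) := by
      push_cast
      ring
    rw [hfactor, mul_eq_zero, sub_eq_zero, sub_eq_zero]
end

section
/- Assume the su(2) endomorphism triple setup with Casimir parameter j, where V is finite-dimensional over ℂ and j is a real number with j ≥ 0 and 2j ∈ ℤ. Define the ℂ-linear endomorphism St of V³ = (Fin 3 → V) by (St a)_a = Σ_{b,c} ε_{abc} T_b(a_c). Then (St + j·id) ∘ (St − id) ∘ (St − (j+1)·id) = 0; in particular every eigenvalue of St lies in {−j, 1, j+1}. -/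
/-- The operator `𝔰·𝔱` on `V³`: `(St a)_a = Σ_{b,c} ε_{abc} T_b(a_c)`. -/
noncomputable def St {V : Type*} [AddCommGroup V] [Module ℂ V]
    (T : Fin 3 → Module.End ℂ V) : Module.End ℂ (Fin 3 → V) :=
  LinearMap.pi fun a => ∑ b, ∑ c, eps3 a b c • ((T b) ∘ₗ (LinearMap.proj c))

section Curl

variable {V : Type*} [AddCommGroup V] [Module ℂ V] (T : Fin 3 → Module.End ℂ V)

/-- `St T` is the curl `a ↦ T × a`. -/
theorem St_apply (a : Fin 3 → V) :
    St T a = ![T 1 (a 2) - T 2 (a 1), T 2 (a 0) - T 0 (a 2), T 0 (a 1) - T 1 (a 0)] := by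
  ext i
  fin_cases i <;> simp [St, eps3, Fin.sum_univ_three] <;> norm_num <;> abel

variable {T}

/-- The curl fixes gradients, since `T × T = T`. -/
theorem St_gradient
    (h12 : T 0 * T 1 - T 1 * T 0 = T 2)
    (h23 : T 1 * T 2 - T 2 * T 1 = T 0)
    (h31 : T 2 * T 0 - T 0 * T 2 = T 1) (v : V) :
    St T (fun i => T i v) = fun i => T i v := by
  rw [St_apply]
  ext i
  fin_cases i
  · exact LinearMap.congr_fun h23 v
  · exact LinearMap.congr_fun h31 v
  · exact LinearMap.congr_fun h12 v

/-- The curl of a curl: `T × (T × a) = T × a + c a + T (T · a)` when `T · T = -c`. -/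
theorem St_St_apply
    (h12 : T 0 * T 1 - T 1 * T 0 = T 2)
    (h23 : T 1 * T 2 - T 2 * T 1 = T 0)
    (h31 : T 2 * T 0 - T 0 * T 2 = T 1)
    {c : ℂ} (hcas : T 0 ^ 2 + T 1 ^ 2 + T 2 ^ 2 = -c • (1 : Module.End ℂ V))
    (a : Fin 3 → V) :
    St T (St T a) = St T a + c • a + fun i => T i (∑ k, T k (a k)) := by
  have e12 (v : V) : T 2 v = T 0 (T 1 v) - T 1 (T 0 v) := (LinearMap.congr_fun h12 v).symm
  have e23 (v : V) : T 0 v = T 1 (T 2 v) - T 2 (T 1 v) := (LinearMap.congr_fun h23 v).symm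
  have e31 (v : V) : T 1 v = T 2 (T 0 v) - T 0 (T 2 v) := (LinearMap.congr_fun h31 v).symm
  have ec (v : V) : c • v = -(T 0 (T 0 v) + T 1 (T 1 v) + T 2 (T 2 v)) := by
    have h := LinearMap.congr_fun hcas v
    simp only [pow_two, LinearMap.add_apply, Module.End.mul_apply, LinearMap.smul_apply,
      Module.End.one_apply] at h
    rw [h, neg_smul, neg_neg]
  ext i
  rw [Pi.add_apply, Pi.add_apply, Pi.smul_apply, ec]
  fin_cases i
  · simp [St_apply, Fin.sum_univ_three, e12 (a 1), e31 (a 2)]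
    abel
  · simp [St_apply, Fin.sum_univ_three, e12 (a 0), e23 (a 2)]
    abel
  · simp [St_apply, Fin.sum_univ_three, e31 (a 0), e23 (a 1)]
    abel

/-- The cubic relation `(S - 1) (S² - S - c) = 0` satisfied by the curl `S`. -/
theorem St_sub_one_mul_quadratic
    (h12 : T 0 * T 1 - T 1 * T 0 = T 2)
    (h23 : T 1 * T 2 - T 2 * T 1 = T 0)
    (h31 : T 2 * T 0 - T 0 * T 2 = T 1)
    {c : ℂ} (hcas : T 0 ^ 2 + T 1 ^ 2 + T 2 ^ 2 = -c • (1 : Module.End ℂ V)) :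
    (St T - 1) * (St T * St T - St T - c • 1) = 0 := by
  refine LinearMap.ext fun a => ?_
  have h : (St T * St T - St T - c • 1 : Module.End ℂ (Fin 3 → V)) a
      = fun i => T i (∑ k, T k (a k)) := by
    simp only [LinearMap.sub_apply, Module.End.mul_apply, LinearMap.smul_apply,
      Module.End.one_apply, St_St_apply h12 h23 h31 hcas]
    abel
  rw [Module.End.mul_apply, h, LinearMap.sub_apply, St_gradient h12 h23 h31,
    Module.End.one_apply, sub_self, LinearMap.zero_apply]

end Curl

/-- For an su(2) endomorphism triple with Casimir parameter `j` (with `j ≥ 0`, `2j ∈ ℤ`)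
on a finite-dimensional complex vector space, the operator `St` satisfies
`(St + j)(St − 1)(St − (j+1)) = 0`; in particular every eigenvalue of `St` lies in
`{−j, 1, j+1}`. -/
theorem St_cubic_annihilated {V : Type*} [AddCommGroup V] [Module ℂ V]
    [FiniteDimensional ℂ V]
    (T : Fin 3 → Module.End ℂ V)
    (h12 : T 0 * T 1 - T 1 * T 0 = T 2)
    (h23 : T 1 * T 2 - T 2 * T 1 = T 0)
    (h31 : T 2 * T 0 - T 0 * T 2 = T 1)
    (j : ℝ) (hj : 0 ≤ j) (hj2 : ∃ m : ℤ, (m : ℝ) = 2 * j)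
    (hcas : T 0 ^ 2 + T 1 ^ 2 + T 2 ^ 2
      = -(((j * (j + 1) : ℝ) : ℂ)) • (1 : Module.End ℂ V)) :
    (St T + (j : ℂ) • (1 : Module.End ℂ (Fin 3 → V)))
        * (St T - 1)
        * (St T - ((j : ℂ) + 1) • (1 : Module.End ℂ (Fin 3 → V))) = 0
    ∧ ∀ μ : ℂ, Module.End.HasEigenvalue (St T) μ →
        μ = -(j : ℂ) ∨ μ = 1 ∨ μ = (j : ℂ) + 1 := by
  have hcubic : (St T + (j : ℂ) • (1 : Module.End ℂ (Fin 3 → V))) * (St T - 1)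
      * (St T - ((j : ℂ) + 1) • (1 : Module.End ℂ (Fin 3 → V))) = 0 := by
    rw [← St_sub_one_mul_quadratic h12 h23 h31 hcas]
    push_cast
    simp only [add_mul, sub_mul, mul_sub, smul_mul_assoc, mul_smul_comm, one_mul, mul_one,
      mul_assoc, smul_sub]
    module
  refine ⟨hcubic, fun μ hμ => ?_⟩
  obtain ⟨v, hv⟩ := hμ.exists_hasEigenvector
  have h := LinearMap.congr_fun hcubic v
  have hmul : ((μ + j) * (μ - 1) * (μ - (j + 1))) • v = 0 := by
    rw [← LinearMap.zero_apply (σ₁₂ := RingHom.id ℂ) v, ← h]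
    simp only [Module.End.mul_apply, LinearMap.sub_apply, LinearMap.add_apply,
      LinearMap.smul_apply, Module.End.one_apply, hv.apply_eq_smul, map_sub, map_smul]
    module
  rcases mul_eq_zero.1 ((smul_eq_zero.1 hmul).resolve_right hv.2) with h | h
  · rcases mul_eq_zero.1 h with h | h
    · exact Or.inl (eq_neg_of_add_eq_zero_left h)
    · exact Or.inr (Or.inl (sub_eq_zero.1 h))
  · exact Or.inr (Or.inr (sub_eq_zero.1 h))
end

section
/- Assume the su(2) endomorphism triple setup with Casimir parameter j, where V is a nonzero finite-dimensional complex vector space and j is a real number with j > 0 and 2j ∈ ℤ. Define the ℂ-linear endomorphism M₁ of (Fin 3 → V) × V by M₁(a, φ) = ( (Σ_{b,c} ε_{abc} T_b(a_c) − T_a(φ))_{a=1,2,3}, Σ_{a} T_a(a_a) ). Then the spectrum of M₁ is exactly {−j, j+1}. (These are the indicial roots of the linearized gauge-fixed KW operator at the Nahm pole in the (a_a, φ_y) sector.) -/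
/-- The indicial operator in the `(a_a, φ_y)` sector:
`M₁(a, φ) = ((Σ_{b,c} ε_{abc} T_b(a_c) − T_a(φ))_a , Σ_a T_a(a_a))`. -/
noncomputable def M1 {V : Type*} [AddCommGroup V] [Module ℂ V]
    (T : Fin 3 → Module.End ℂ V) : Module.End ℂ ((Fin 3 → V) × V) :=
  LinearMap.prod
    (LinearMap.pi fun a =>
      (∑ b, ∑ c, eps3 a b c •
          ((T b) ∘ₗ (LinearMap.proj c) ∘ₗ (LinearMap.fst ℂ (Fin 3 → V) V)))
        - (T a) ∘ₗ (LinearMap.snd ℂ (Fin 3 → V) V))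
    (∑ a, (T a) ∘ₗ (LinearMap.proj a) ∘ₗ (LinearMap.fst ℂ (Fin 3 → V) V))

/-- The value of `M1 T` at `x`, with all sums expanded. -/
lemma M1_apply {V : Type*} [AddCommGroup V] [Module ℂ V] (T : Fin 3 → Module.End ℂ V)
    (x : (Fin 3 → V) × V) :
    M1 T x = (![T 1 (x.1 2) - T 2 (x.1 1) - T 0 x.2,
        T 2 (x.1 0) - T 0 (x.1 2) - T 1 x.2,
        T 0 (x.1 1) - T 1 (x.1 0) - T 2 x.2],
      T 0 (x.1 0) + T 1 (x.1 1) + T 2 (x.1 2)) := by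
  refine Prod.ext (funext fun a => ?_) ?_
  · fin_cases a <;> simp [M1, eps3, Fin.sum_univ_three] <;> norm_num <;> abel
  · simp [M1, Fin.sum_univ_three]

/-- The quadratic equation satisfied by `M1 T` when the Casimir operator is the scalar `-κ`. -/
lemma M1_mul_self {V : Type*} [AddCommGroup V] [Module ℂ V] (T : Fin 3 → Module.End ℂ V)
    (h12 : T 0 * T 1 - T 1 * T 0 = T 2)
    (h23 : T 1 * T 2 - T 2 * T 1 = T 0)
    (h31 : T 2 * T 0 - T 0 * T 2 = T 1) (κ : ℂ)
    (hcas : T 0 ^ 2 + T 1 ^ 2 + T 2 ^ 2 = -κ • (1 : Module.End ℂ V)) :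
    M1 T * M1 T = M1 T + κ • 1 := by
  have e12 (v : V) : T 2 v = T 0 (T 1 v) - T 1 (T 0 v) := by simp [← h12]
  have e23 (v : V) : T 0 v = T 1 (T 2 v) - T 2 (T 1 v) := by
    simpa using (LinearMap.congr_fun h23 v).symm
  have e31 (v : V) : T 1 v = T 2 (T 0 v) - T 0 (T 2 v) := by
    simpa using (LinearMap.congr_fun h31 v).symm
  have ec (v : V) : κ • v = -(T 0 (T 0 v) + T 1 (T 1 v) + T 2 (T 2 v)) := by
    have h := LinearMap.congr_fun hcas v
    simp only [pow_two, LinearMap.add_apply, Module.End.mul_apply, LinearMap.smul_apply,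
      Module.End.one_apply] at h
    rw [h, neg_smul, neg_neg]
  refine LinearMap.ext fun x => ?_
  obtain ⟨a, φ⟩ := x
  simp only [Module.End.mul_apply, LinearMap.add_apply, LinearMap.smul_apply,
    Module.End.one_apply, M1_apply]
  refine Prod.ext (funext fun i => ?_) ?_
  · fin_cases i
    · simp [ec, Matrix.vecHead, Matrix.vecTail]
      linear_combination (norm := module) e12 (a 1) - e31 (a 2) + e23 φ
    · simp [ec, Matrix.vecHead, Matrix.vecTail]
      linear_combination (norm := module) e23 (a 2) - e12 (a 0) + e31 φ
    · simp [ec, Matrix.vecHead, Matrix.vecTail]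
      linear_combination (norm := module) e31 (a 0) - e23 (a 1) + e12 φ
  · simp [ec]
    linear_combination (norm := module) -e12 (a 2) - e23 (a 0) - e31 (a 1)

/-- If `M1 T` is a scalar, then `T` vanishes. -/
lemma eq_zero_of_M1_eq_smul_one {V : Type*} [AddCommGroup V] [Module ℂ V]
    (T : Fin 3 → Module.End ℂ V) (c : ℂ) (h : M1 T = c • 1) : T = 0 := by
  have key (v : V) := congrArg Prod.fst (LinearMap.congr_fun h (0, v))
  refine funext fun i => LinearMap.ext fun v => ?_
  have hi := congrFun (key v) i
  rw [M1_apply] at hi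
  fin_cases i <;> simpa using hi

/-- For an su(2) endomorphism triple with Casimir parameter `j > 0` (with `2j ∈ ℤ`) on a
nonzero finite-dimensional complex vector space, the spectrum of the indicial operator `M₁`
in the `(a_a, φ_y)` sector is exactly `{−j, j+1}`. -/
theorem spectrum_M1 {V : Type*} [AddCommGroup V] [Module ℂ V]
    [FiniteDimensional ℂ V] [Nontrivial V]
    (T : Fin 3 → Module.End ℂ V)
    (h12 : T 0 * T 1 - T 1 * T 0 = T 2)
    (h23 : T 1 * T 2 - T 2 * T 1 = T 0)
    (h31 : T 2 * T 0 - T 0 * T 2 = T 1)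
    (j : ℝ) (hj : 0 < j) (hj2 : ∃ m : ℤ, (m : ℝ) = 2 * j)
    (hcas : T 0 ^ 2 + T 1 ^ 2 + T 2 ^ 2
      = -(((j * (j + 1) : ℝ) : ℂ)) • (1 : Module.End ℂ V)) :
    spectrum ℂ (M1 T) = {-(j : ℂ), (j : ℂ) + 1} := by
  have hsq := M1_mul_self T h12 h23 h31 _ hcas
  have hscalar (c : ℂ) : M1 T ≠ c • 1 := by
    intro h
    have hT := eq_zero_of_M1_eq_smul_one T c h
    simp [hT] at hcas
    norm_cast at hcas
    rcases hcas with h | h <;> linarith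
  have hfactor (c : ℂ) (hc : c * c - c = ((j * (j + 1) : ℝ) : ℂ)) :
      (algebraMap ℂ _ c - M1 T) * (M1 T - (1 - c) • 1) = 0 := by
    rw [Algebra.algebraMap_eq_smul_one]
    simp only [sub_mul, mul_sub, hsq, smul_mul_assoc, mul_smul_comm, one_mul, mul_one, ← hc]
    module
  ext c
  simp only [Set.mem_insert_iff, Set.mem_singleton_iff]
  have hroots : c * c - c = ((j * (j + 1) : ℝ) : ℂ) ↔ c = -(j : ℂ) ∨ c = (j : ℂ) + 1 := by
    rw [← sub_eq_zero, ← add_eq_zero_iff_eq_neg, ← sub_eq_zero (b := (j : ℂ) + 1), ← mul_eq_zero]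
    push_cast
    constructor <;> intro h <;> linear_combination h
  rw [← hroots]
  constructor
  · intro hc
    obtain ⟨v, hv⟩ := (Module.End.hasEigenvalue_iff_mem_spectrum.mpr hc).exists_hasEigenvector
    have h := LinearMap.congr_fun hsq v
    simp only [Module.End.mul_apply, LinearMap.add_apply, LinearMap.smul_apply,
      Module.End.one_apply, hv.apply_eq_smul, map_smul] at h
    refine smul_left_injective ℂ hv.2 ?_
    linear_combination (norm := module) h
  · intro hc
    rw [spectrum.mem_iff]
    exact fun hu => hscalar (1 - c) (sub_eq_zero.mp (hu.mul_right_eq_zero.mp (hfactor c hc)))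
end

section
/- Assume the su(2) endomorphism triple setup with Casimir parameter j, where V is a nonzero finite-dimensional complex vector space and j is a real number with j > 0 and 2j ∈ ℤ. Define the ℂ-linear endomorphism M₂ of (Fin 3 → V) × V by M₂(φ, ψ) = ( (T_a(ψ) − Σ_{b,c} ε_{abc} T_b(φ_c))_{a=1,2,3}, −Σ_{a} T_a(φ_a) ). Then the spectrum of M₂ is exactly {j, −(j+1)}. (These are the indicial roots in the (φ_a, a_y) sector; they are the negatives of those in the (a_a, φ_y) sector.) -/
/-- The indicial operator in the `(φ_a, a_y)` sector:
`M₂(φ, ψ) = ((T_a(ψ) − Σ_{b,c} ε_{abc} T_b(φ_c))_a , −Σ_a T_a(φ_a))`. -/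
noncomputable def M2 {V : Type*} [AddCommGroup V] [Module ℂ V]
    (T : Fin 3 → Module.End ℂ V) : Module.End ℂ ((Fin 3 → V) × V) :=
  LinearMap.prod
    (LinearMap.pi fun a =>
      (T a) ∘ₗ (LinearMap.snd ℂ (Fin 3 → V) V)
        - ∑ b, ∑ c, eps3 a b c •
            ((T b) ∘ₗ (LinearMap.proj c) ∘ₗ (LinearMap.fst ℂ (Fin 3 → V) V)))
    (-(∑ a, (T a) ∘ₗ (LinearMap.proj a) ∘ₗ (LinearMap.fst ℂ (Fin 3 → V) V)))

open Polynomial in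
/-- The spectrum of a non-scalar element annihilated by `(X - α) * (X - β)` is `{α, β}`. -/
theorem spectrum_eq_pair_of_mul_eq_zero {K A : Type*} [Field K] [Ring A] [Algebra K A]
    [Nontrivial A] {a : A} {α β : K}
    (h : (a - algebraMap K A α) * (a - algebraMap K A β) = 0)
    (hα : a ≠ algebraMap K A α) (hβ : a ≠ algebraMap K A β) :
    spectrum K a = {α, β} := by
  have hcomm : (a - algebraMap K A β) * (a - algebraMap K A α) = 0 := by
    rw [← h]
    simp only [mul_sub, sub_mul, Algebra.commutes, ← map_mul, mul_comm α β]
    abel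
  apply Set.Subset.antisymm
  · intro μ hμ
    have hp : aeval a ((X - C α) * (X - C β)) = 0 := by simpa using h
    have hmem := spectrum.subset_polynomial_aeval a ((X - C α) * (X - C β)) ⟨μ, hμ, rfl⟩
    rw [hp, spectrum.zero_eq] at hmem
    simpa [sub_eq_zero] using hmem
  · rintro μ (rfl | rfl)
    · rw [spectrum.mem_iff, IsUnit.sub_iff]
      exact fun hu => hβ (sub_eq_zero.mp (hu.mul_right_eq_zero.mp h))
    · rw [spectrum.mem_iff, IsUnit.sub_iff]
      exact fun hu => hα (sub_eq_zero.mp (hu.mul_right_eq_zero.mp hcomm))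

section

variable {V : Type*} [AddCommGroup V] [Module ℂ V] (T : Fin 3 → Module.End ℂ V)

theorem M2_apply (x : (Fin 3 → V) × V) :
    M2 T x =
      (![T 0 x.2 - (T 1 (x.1 2) - T 2 (x.1 1)),
         T 1 x.2 - (T 2 (x.1 0) - T 0 (x.1 2)),
         T 2 x.2 - (T 0 (x.1 1) - T 1 (x.1 0))],
       -(T 0 (x.1 0) + T 1 (x.1 1) + T 2 (x.1 2))) := by
  refine Prod.ext (funext fun a => ?_) ?_
  · fin_cases a <;> simp [M2, eps3, Fin.sum_univ_three] <;> norm_num <;> abel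
  · simp [M2, Fin.sum_univ_three]

/-- The quadratic relation `M₂² + M₂ = -(T₁² + T₂² + T₃²)` for a triple with scalar Casimir. -/
theorem M2_mul_self_add_self
    (h12 : T 0 * T 1 - T 1 * T 0 = T 2)
    (h23 : T 1 * T 2 - T 2 * T 1 = T 0)
    (h31 : T 2 * T 0 - T 0 * T 2 = T 1) {c : ℂ}
    (hcas : T 0 ^ 2 + T 1 ^ 2 + T 2 ^ 2 = -c • (1 : Module.End ℂ V)) :
    M2 T * M2 T + M2 T = c • (1 : Module.End ℂ ((Fin 3 → V) × V)) := by
  have e12 (v : V) : T 2 v = T 0 (T 1 v) - T 1 (T 0 v) := (LinearMap.congr_fun h12 v).symm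
  have e23 (v : V) : T 0 v = T 1 (T 2 v) - T 2 (T 1 v) := (LinearMap.congr_fun h23 v).symm
  have e31 (v : V) : T 1 v = T 2 (T 0 v) - T 0 (T 2 v) := (LinearMap.congr_fun h31 v).symm
  have ec (v : V) : c • v = -(T 0 (T 0 v) + T 1 (T 1 v) + T 2 (T 2 v)) := by
    have := LinearMap.congr_fun hcas v
    simp only [pow_two, LinearMap.add_apply, Module.End.mul_apply, LinearMap.smul_apply,
      Module.End.one_apply] at this
    rw [this, neg_smul, neg_neg]
  refine LinearMap.ext fun x => ?_
  simp only [LinearMap.add_apply, Module.End.mul_apply, LinearMap.smul_apply,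
    Module.End.one_apply]
  obtain ⟨φ, ψ⟩ := x
  refine Prod.ext (funext fun a => ?_) ?_
  · fin_cases a <;> simp [M2_apply, ec]
    · linear_combination (norm := module) e23 ψ + e12 (φ 1) - e31 (φ 2)
    · linear_combination (norm := module) e31 ψ - e12 (φ 0) + e23 (φ 2)
    · linear_combination (norm := module) e12 ψ + e31 (φ 0) - e23 (φ 1)
  · simp [M2_apply, ec]
    linear_combination (norm := module) -e23 (φ 0) - e31 (φ 1) - e12 (φ 2)

theorem M2_ne_algebraMap [Nontrivial V] {c : ℂ} (hc : c ≠ 0) :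
    M2 T ≠ algebraMap ℂ (Module.End ℂ ((Fin 3 → V) × V)) c := by
  intro h
  obtain ⟨v, hv⟩ := exists_ne (0 : V)
  have h2 := congrArg Prod.snd (LinearMap.congr_fun h (0, v))
  simp [M2_apply, Module.algebraMap_end_apply, hc, hv, eq_comm] at h2

end

/-- For an su(2) endomorphism triple with Casimir parameter `j > 0` (with `2j ∈ ℤ`) on a
nonzero finite-dimensional complex vector space, the spectrum of the indicial operator `M₂`
in the `(φ_a, a_y)` sector is exactly `{j, −(j+1)}`: the negatives of the indicial roots of
the `(a_a, φ_y)` sector. -/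
theorem spectrum_M2 {V : Type*} [AddCommGroup V] [Module ℂ V]
    [FiniteDimensional ℂ V] [Nontrivial V]
    (T : Fin 3 → Module.End ℂ V)
    (h12 : T 0 * T 1 - T 1 * T 0 = T 2)
    (h23 : T 1 * T 2 - T 2 * T 1 = T 0)
    (h31 : T 2 * T 0 - T 0 * T 2 = T 1)
    (j : ℝ) (hj : 0 < j) (hj2 : ∃ m : ℤ, (m : ℝ) = 2 * j)
    (hcas : T 0 ^ 2 + T 1 ^ 2 + T 2 ^ 2
      = -(((j * (j + 1) : ℝ) : ℂ)) • (1 : Module.End ℂ V)) :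
    spectrum ℂ (M2 T) = {(j : ℂ), -((j : ℂ) + 1)} := by
  have hrel := M2_mul_self_add_self T h12 h23 h31 hcas
  have hj0 : (j : ℂ) ≠ 0 := by exact_mod_cast hj.ne'
  have hj1 : -((j : ℂ) + 1) ≠ 0 := neg_ne_zero.mpr (by exact_mod_cast (by positivity : j + 1 ≠ 0))
  refine spectrum_eq_pair_of_mul_eq_zero ?_ (M2_ne_algebraMap T hj0) (M2_ne_algebraMap T hj1)
  simp only [Algebra.algebraMap_eq_smul_one, mul_sub, sub_mul, smul_mul_assoc, mul_smul_comm,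
    one_mul, mul_one]
  rw [eq_sub_of_add_eq hrel]
  push_cast
  module
end

section
/- Let j ≥ 0 be a real number. The function u(x) = x₄^{j+1} · ‖x‖^{−(2j+4)} on Ω = {x ∈ ℝ⁴ : x₄ > 0} satisfies Σ_{i=1}^{4} ∂²u/∂x_i² = j(j+1) · x₄^{−2} · u on Ω. (In polar form u = cos^{j+1}ψ · r^{−(j+3)} with cos ψ = x₄/‖x‖: this is the mode by which fluctuations around the Nahm pole solution in four dimensions decay as r^{−3−j} at infinity and vanish as x₄^{j+1} at the boundary.) -/
/-- Partial derivative in the `i`-th coordinate direction of a real-valued function on `ℝᵈ`. -/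
noncomputable def pdR {d : ℕ} (i : Fin d) (f : (Fin d → ℝ) → ℝ) (x : Fin d → ℝ) : ℝ :=
  deriv (fun t => f (Function.update x i t)) (x i)

open Function Filter Topology

/-- The function `x ↦ x₄ ^ a * (‖x‖²) ^ b` on `ℝ⁴`. -/
noncomputable def heightNormPow (a b : ℝ) (x : Fin 4 → ℝ) : ℝ :=
  x 3 ^ a * (∑ k, x k ^ 2) ^ b

lemma sum_sq_pos_of_last_pos {x : Fin 4 → ℝ} (hx : 0 < x 3) : 0 < ∑ k, x k ^ 2 :=
  (pow_pos hx 2).trans_le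
    (Finset.single_le_sum (f := fun k => x k ^ 2) (fun k _ => sq_nonneg (x k)) (Finset.mem_univ 3))

lemma hasDerivAt_update_apply {d : ℕ} (i k : Fin d) (x : Fin d → ℝ) (t : ℝ) :
    HasDerivAt (fun s => update x i s k) (if k = i then 1 else 0) t := by
  by_cases h : k = i
  · subst h
    simpa using hasDerivAt_id' t
  · simpa [h] using hasDerivAt_const t (x k)

lemma hasDerivAt_update_sum_sq {d : ℕ} (i : Fin d) (x : Fin d → ℝ) :
    HasDerivAt (fun s => ∑ k, update x i s k ^ 2) (2 * x i) (x i) := by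
  have h := HasDerivAt.fun_sum (u := Finset.univ)
    fun k _ => (hasDerivAt_update_apply i k x (x i)).fun_pow 2
  simpa using h

lemma hasDerivAt_heightNormPow (a b : ℝ) (i : Fin 4) {x : Fin 4 → ℝ} (hx : 0 < x 3) :
    HasDerivAt (fun t => heightNormPow a b (update x i t))
      ((if 3 = i then 1 else 0) * a * heightNormPow (a - 1) b x
        + 2 * b * x i * heightNormPow a (b - 1) x) (x i) := by
  have hy := (hasDerivAt_update_apply i 3 x (x i)).rpow_const (p := a)
    (Or.inl (by simpa using hx.ne'))
  have hs := (hasDerivAt_update_sum_sq i x).rpow_const (p := b)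
    (Or.inl (by simpa using (sum_sq_pos_of_last_pos hx).ne'))
  refine (hy.mul hs).congr_deriv ?_
  simp only [heightNormPow, update_eq_self]
  ring

lemma pdR_heightNormPow (a b : ℝ) (i : Fin 4) {x : Fin 4 → ℝ} (hx : 0 < x 3) :
    pdR i (heightNormPow a b) x =
      (if 3 = i then 1 else 0) * a * heightNormPow (a - 1) b x
        + 2 * b * x i * heightNormPow a (b - 1) x :=
  (hasDerivAt_heightNormPow a b i hx).deriv

lemma pdR_pdR_heightNormPow (a b : ℝ) (i : Fin 4) {x : Fin 4 → ℝ} (hx : 0 < x 3) :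
    pdR i (pdR i (heightNormPow a b)) x =
      (if 3 = i then 1 else 0) * (a * (a - 1) * heightNormPow (a - 2) b x
          + 4 * a * b * x i * heightNormPow (a - 1) (b - 1) x)
        + 2 * b * heightNormPow a (b - 1) x
        + 4 * b * (b - 1) * x i ^ 2 * heightNormPow a (b - 2) x := by
  have hpos : ∀ᶠ t in 𝓝 (x i), 0 < update x i t 3 :=
    (hasDerivAt_update_apply i 3 x (x i)).continuousAt.eventually_const_lt (by simpa using hx)
  have heq : (fun t => pdR i (heightNormPow a b) (update x i t)) =ᶠ[𝓝 (x i)] fun t =>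
      (if 3 = i then 1 else 0) * a * heightNormPow (a - 1) b (update x i t)
        + 2 * b * (t * heightNormPow a (b - 1) (update x i t)) := by
    filter_upwards [hpos] with t ht
    rw [pdR_heightNormPow a b i ht, update_self]
    ring
  have hderiv := ((hasDerivAt_heightNormPow (a - 1) b i hx).const_mul
    ((if 3 = i then 1 else 0) * a)).add
      (((hasDerivAt_id (x i)).mul (hasDerivAt_heightNormPow a (b - 1) i hx)).const_mul (2 * b))
  rw [pdR, heq.deriv_eq]
  refine hderiv.deriv.trans ?_
  simp only [update_eq_self, id, sub_sub, one_add_one_eq_two]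
  split_ifs <;> ring

/-- The Laplacian of `x₄ ^ a * (‖x‖²) ^ b` on the half-space `x₄ > 0`. -/
lemma sum_pdR_pdR_heightNormPow (a b : ℝ) {x : Fin 4 → ℝ} (hx : 0 < x 3) :
    ∑ i, pdR i (pdR i (heightNormPow a b)) x =
      a * (a - 1) * (x 3 ^ 2)⁻¹ * heightNormPow a b x
        + 4 * b * (a + b + 1) * heightNormPow a (b - 1) x := by
  have hs := sum_sq_pos_of_last_pos hx
  have hlow : heightNormPow (a - 2) b x = (x 3 ^ 2)⁻¹ * heightNormPow a b x := by
    rw [heightNormPow, heightNormPow, Real.rpow_sub hx, Real.rpow_two]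
    ring
  have hmid : x 3 * heightNormPow (a - 1) (b - 1) x = heightNormPow a (b - 1) x := by
    rw [heightNormPow, heightNormPow, Real.rpow_sub_one hx.ne']
    field_simp
  have hrad : (∑ k, x k ^ 2) * heightNormPow a (b - 2) x = heightNormPow a (b - 1) x := by
    rw [heightNormPow, heightNormPow, show b - 2 = b - 1 - 1 by ring,
      Real.rpow_sub_one hs.ne' (b - 1)]
    field_simp
  simp only [pdR_pdR_heightNormPow a b _ hx, Finset.sum_add_distrib, ite_mul, one_mul, zero_mul,
    Finset.sum_ite_eq, Finset.mem_univ, if_true, Finset.sum_const, Finset.card_univ,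
    Fintype.card_fin, nsmul_eq_mul, ← Finset.sum_mul, ← Finset.mul_sum]
  push_cast
  linear_combination a * (a - 1) * hlow + 4 * a * b * hmid + 4 * b * (b - 1) * hrad

/-- For `j ≥ 0`, the function `u(x) = x₄^{j+1} ‖x‖^{−(2j+4)}` on the half-space `x₄ > 0`
in `ℝ⁴` satisfies `Σᵢ ∂²u/∂xᵢ² = j(j+1) x₄⁻² u`. This is the mode by which fluctuations
around the Nahm pole solution decay as `r^{−3−j}` at infinity and vanish as `x₄^{j+1}` at
the boundary. -/
theorem four_dim_decay_mode (j : ℝ) (hj : 0 ≤ j)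
    (u : (Fin 4 → ℝ) → ℝ)
    (hu : ∀ x, u x = (x 3) ^ (j + 1) * (Real.sqrt (∑ i, x i ^ 2)) ^ (-(2 * j + 4))) :
    ∀ x : Fin 4 → ℝ, 0 < x 3 →
      ∑ i, pdR i (pdR i u) x = j * (j + 1) * ((x 3) ^ 2)⁻¹ * u x := by
  have hfun : u = heightNormPow (j + 1) (-(j + 2)) := by
    funext x
    rw [hu, heightNormPow, Real.sqrt_eq_rpow,
      ← Real.rpow_mul (Finset.sum_nonneg fun k _ => sq_nonneg (x k))]
    ring_nf
  intro x hx
  rw [hfun, sum_pdR_pdR_heightNormPow _ _ hx]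
  ring
end

section
/- Let j ≥ 0 be a real number. For all ψ ∈ (0, π/2), the function f(ψ) = (cos ψ)^{j+1} satisfies the eigenvalue equation −(sin ψ)^{−3} · d/dψ( (sin ψ)³ · f′(ψ) ) + j(j+1) · (cos ψ)^{−2} · f(ψ) = (j+1)(j+4) · f(ψ). (That is, in the five-dimensional setting, cos^{j+1}ψ is an eigenfunction with eigenvalue (j+1)(j+4) of the operator W = Δ_{S⁴} + j(j+1)/cos²ψ restricted to functions of the polar angle ψ.) -/
open Real

/-- The derivative of a real power of the cosine, where the cosine is positive. -/
lemma hasDerivAt_cos_rpow (p : ℝ) {x : ℝ} (hx : 0 < cos x) :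
    HasDerivAt (fun y => cos y ^ p) (-(p * cos x ^ (p - 1) * sin x)) x := by
  convert (hasDerivAt_cos x).rpow_const (p := p) (Or.inl hx.ne') using 1
  ring

/-- For `j ≥ 0`, in the five-dimensional setting, `f(ψ) = cos^{j+1}ψ` is an eigenfunction,
with eigenvalue `(j+1)(j+4)`, of the operator `W = Δ_{S⁴} + j(j+1)/cos²ψ` on the
hemisphere, restricted to functions of the polar angle `ψ`. -/
theorem hemisphere_eigenfunction_5d (j : ℝ) (hj : 0 ≤ j)
    (f : ℝ → ℝ) (hf : ∀ ψ, f ψ = (Real.cos ψ) ^ (j + 1)) :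
    ∀ ψ ∈ Set.Ioo (0 : ℝ) (π / 2),
      -((Real.sin ψ) ^ 3)⁻¹ * deriv (fun ψ => (Real.sin ψ) ^ 3 * deriv f ψ) ψ
        + j * (j + 1) * ((Real.cos ψ) ^ 2)⁻¹ * f ψ
      = (j + 1) * (j + 4) * f ψ := by
  intro ψ hψ
  obtain rfl : f = fun x => cos x ^ (j + 1) := funext hf
  have hs : 0 < sin ψ := sin_pos_of_pos_of_lt_pi hψ.1 (by linarith [hψ.2, pi_pos])
  have hc : 0 < cos ψ := cos_pos_of_mem_Ioo ⟨by linarith [hψ.1, pi_pos], hψ.2⟩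
  have hflux : (fun x => sin x ^ 3 * deriv (fun y => cos y ^ (j + 1)) x) =ᶠ[nhds ψ]
      fun x => -(j + 1) * (sin x ^ 4 * cos x ^ j) := by
    filter_upwards [continuous_cos.continuousAt.eventually (lt_mem_nhds hc)] with x hx
    rw [(hasDerivAt_cos_rpow (j + 1) hx).deriv, add_sub_cancel_right]
    ring
  have hderiv := (((hasDerivAt_sin ψ).fun_pow 4).fun_mul
    (hasDerivAt_cos_rpow j hc)).const_mul (-(j + 1))
  rw [hflux.deriv_eq, hderiv.deriv]
  simp only [rpow_add_one hc.ne', rpow_sub_one hc.ne']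
  field_simp
  rw [cos_sq']
  push_cast
  ring
end

section
/- Let t₁, t₂, t₃ be matrices satisfying the su(2) commutation relations. On {y ∈ ℝ : y > 0}, define the antisymmetric array B_{μν}(y) for μ,ν ∈ {0,1,2,3} by B_{0a}(y) = y⁻¹ t_a = −B_{a0}(y) for a = 1,2,3, B_{ab}(y) = y⁻¹ Σ_{c} ε_{abc} t_c for a,b ∈ {1,2,3}, and B_{μμ} = 0. Then for all y > 0 and all μ,ν ∈ {0,1,2,3}: Σ_{σ=0}^{3} [B_{μσ}(y), B_{νσ}(y)] + 2 · B_{μν}′(y) = 0. (Together with F = 0 for the zero connection, this says that the five-dimensional Nahm pole solution A = 0, B_{0a} = t_a/y, B_{ab} = ε_{abc}t_c/y solves the five-dimensional equations F⁺ − (1/4)B×B − (1/2)D_yB = 0, F_{yμ} + D^νB_{νμ} = 0, where (B×B)_{μν} = Σ_σ [B_{μσ}, B_{νσ}].) -/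
attribute [local instance] Matrix.normedAddCommGroup Matrix.normedSpace

/-- The constant antisymmetric array `b_{μν}` with `b_{0a} = t_a = −b_{a0}`,
`b_{ab} = Σ_c ε_{abc} t_c`, `b_{μμ} = 0` (indices `μ,ν ∈ {0,1,2,3}`, `a,b ∈ {1,2,3}`). -/
noncomputable def Bconst {n : ℕ} (t : Fin 3 → Matrix (Fin n) (Fin n) ℂ) (μ ν : Fin 4) :
    Matrix (Fin n) (Fin n) ℂ :=
  if hμ : μ.val = 0 then
    (if hν : ν.val = 0 then 0 else t ⟨ν.val - 1, by have := ν.isLt; omega⟩)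
  else if hν : ν.val = 0 then
    -t ⟨μ.val - 1, by have := μ.isLt; omega⟩
  else
    ∑ c, eps3 ⟨μ.val - 1, by have := μ.isLt; omega⟩ ⟨ν.val - 1, by have := ν.isLt; omega⟩ c
        • t c

theorem Bconst_eq_table {n : ℕ} (t : Fin 3 → Matrix (Fin n) (Fin n) ℂ) :
    Bconst t = ![![0, t 0, t 1, t 2], ![-t 0, 0, t 2, -t 1],
      ![-t 1, -t 2, 0, t 0], ![-t 2, t 1, -t 0, 0]] := by
  funext μ ν
  fin_cases μ <;> fin_cases ν <;> norm_num [Bconst, eps3, Fin.sum_univ_succ] <;> rfl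

theorem sum_commutator_Bconst {n : ℕ} (t : Fin 3 → Matrix (Fin n) (Fin n) ℂ)
    (h12 : t 0 * t 1 - t 1 * t 0 = t 2)
    (h23 : t 1 * t 2 - t 2 * t 1 = t 0)
    (h31 : t 2 * t 0 - t 0 * t 2 = t 1) (μ ν : Fin 4) :
    ∑ σ, (Bconst t μ σ * Bconst t ν σ - Bconst t ν σ * Bconst t μ σ)
      = (2 : ℂ) • Bconst t μ ν := by
  rw [Bconst_eq_table, two_smul]
  have e12 := sub_eq_iff_eq_add.mp h12
  have e23 := sub_eq_iff_eq_add.mp h23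
  have e31 := sub_eq_iff_eq_add.mp h31
  fin_cases μ <;> fin_cases ν <;> simp [Fin.sum_univ_four, e12, e23, e31] <;> abel

theorem deriv_ofReal_inv_smul {n : ℕ} (M : Matrix (Fin n) (Fin n) ℂ) {y : ℝ} (hy : y ≠ 0) :
    deriv (fun x : ℝ => ((x : ℂ))⁻¹ • M) y = (-((y : ℂ) ^ 2)⁻¹) • M := by
  have h : HasDerivAt (fun x : ℝ => ((x : ℂ))⁻¹) (-((y : ℂ) ^ 2)⁻¹) y :=
    (hasDerivAt_inv (Complex.ofReal_ne_zero.mpr hy)).comp_ofReal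
  exact (h.smul_const M).deriv

/-- The five-dimensional Nahm pole solution: with `A = 0` and
`B_{0a} = t_a/y`, `B_{ab} = ε_{abc}t_c/y`, the field `B` satisfies
`Σ_σ [B_{μσ}, B_{νσ}] + 2 B'_{μν} = 0`, which (together with `F = 0` for the zero
connection) says that it solves the five-dimensional equations
`F⁺ − (1/4)B×B − (1/2)D_yB = 0`, `F_{yμ} + DᵛB_{νμ} = 0`. -/
theorem five_dim_nahm_pole {n : ℕ} (t : Fin 3 → Matrix (Fin n) (Fin n) ℂ)
    (h12 : t 0 * t 1 - t 1 * t 0 = t 2)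
    (h23 : t 1 * t 2 - t 2 * t 1 = t 0)
    (h31 : t 2 * t 0 - t 0 * t 2 = t 1)
    (B : ℝ → Fin 4 → Fin 4 → Matrix (Fin n) (Fin n) ℂ)
    (hB : ∀ y μ ν, B y μ ν = ((y : ℂ))⁻¹ • Bconst t μ ν) :
    ∀ y : ℝ, 0 < y → ∀ μ ν : Fin 4,
      (∑ σ, (B y μ σ * B y ν σ - B y ν σ * B y μ σ))
        + (2 : ℂ) • deriv (fun y => B y μ ν) y = 0 := by
  intro y hy μ ν
  simp only [hB]
  rw [deriv_ofReal_inv_smul (Bconst t μ ν) hy.ne']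
  simp only [smul_mul_smul_comm, ← smul_sub, ← Finset.smul_sum]
  rw [sum_commutator_Bconst t h12 h23 h31, smul_smul, smul_smul, ← add_smul]
  convert zero_smul ℂ (Bconst t μ ν) using 2
  ring
end

section
/- Fix background fields 𝐀_a, 𝛗_a : U → Matrix (Fin n) (Fin n) ℂ (a = 1,2,3) on an open set U ⊆ ℝ³ (corresponding to a solution with A_y = φ_y = 0), and set D_a X := ∂_a X + [𝐀_a, X]. For differentiable fields Ψ = (a, β, ϕ, γ) with a, ϕ : U → (Fin 3 → Matrix (Fin n) (Fin n) ℂ) and β, γ : U → Matrix (Fin n) (Fin n) ℂ, define BΨ := (P, Q, R, S) where P_a = −D_a γ − [β, 𝛗_a] − Σ_{b,c} ε_{abc}( D_b ϕ_c + [a_b, 𝛗_c] ), Q = Σ_a D_a ϕ_a − Σ_a [𝛗_a, a_a], R_a = [γ, 𝛗_a] − D_a β − Σ_{b,c} ε_{abc} D_b a_c + Σ_{b,c} ε_{abc} [𝛗_b, ϕ_c], and S = Σ_a D_a a_a + Σ_a [𝛗_a, ϕ_a]. Define the linear map N by N(a, β, ϕ, γ) := (ϕ, γ, −a, −β). Then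 B(NΨ) = −N(BΨ) for every differentiable Ψ. (Hence the linearized gauge-fixed KW operator L = ∂_y + B around any background with φ_y = A_y = 0 satisfies the pseudo skew-adjointness relation L† = −N L N⁻¹, since N² = −1 and ∂_y commutes with N.) -/
attribute [local instance] Matrix.normedAddCommGroup Matrix.normedSpace

/-- Partial derivative in the `a`-th coordinate direction on `ℝ³`. -/
noncomputable def pd3 {n : ℕ} (a : Fin 3) (f : (Fin 3 → ℝ) → Matrix (Fin n) (Fin n) ℂ)
    (x : Fin 3 → ℝ) : Matrix (Fin n) (Fin n) ℂ :=
  deriv (fun t => f (Function.update x a t)) (x a)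

/-- The covariant derivative `D_a X = ∂_a X + [Abg_a, X]` in the background `Abg`. -/
noncomputable def Dcov {n : ℕ} (Abg : (Fin 3 → ℝ) → Fin 3 → Matrix (Fin n) (Fin n) ℂ)
    (a : Fin 3) (f : (Fin 3 → ℝ) → Matrix (Fin n) (Fin n) ℂ) (x : Fin 3 → ℝ) :
    Matrix (Fin n) (Fin n) ℂ :=
  pd3 a f x + (Abg x a * f x - f x * Abg x a)

/-- The space of linearized fields `Ψ = (a, β, ϕ, γ)`. -/
abbrev Flds (n : ℕ) :=
  ((Fin 3 → ℝ) → Fin 3 → Matrix (Fin n) (Fin n) ℂ)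
    × ((Fin 3 → ℝ) → Matrix (Fin n) (Fin n) ℂ)
    × ((Fin 3 → ℝ) → Fin 3 → Matrix (Fin n) (Fin n) ℂ)
    × ((Fin 3 → ℝ) → Matrix (Fin n) (Fin n) ℂ)

/-- The zeroth-order (no `∂_y`) part `B` of the linearized gauge-fixed KW operator around a
background `(Abg, phibg)` with `A_y = φ_y = 0`: `BΨ = (P, Q, R, S)` with
`P_a = −D_aγ − [β,phibg_a] − Σ ε_{abc}(D_bϕ_c + [a_b,phibg_c])`,
`Q = Σ D_aϕ_a − Σ [phibg_a, a_a]`,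
`R_a = [γ,phibg_a] − D_aβ − Σ ε_{abc} D_b a_c + Σ ε_{abc} [phibg_b, ϕ_c]`,
`S = Σ D_a a_a + Σ [phibg_a, ϕ_a]`. -/
noncomputable def Bop {n : ℕ} (Abg phibg : (Fin 3 → ℝ) → Fin 3 → Matrix (Fin n) (Fin n) ℂ)
    (Ψ : Flds n) : Flds n :=
  ( fun x a =>
      -Dcov Abg a Ψ.2.2.2 x - (Ψ.2.1 x * phibg x a - phibg x a * Ψ.2.1 x)
        - ∑ b, ∑ c, eps3 a b c •
            (Dcov Abg b (fun x => Ψ.2.2.1 x c) x + (Ψ.1 x b * phibg x c - phibg x c * Ψ.1 x b)),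
    fun x =>
      (∑ a, Dcov Abg a (fun x => Ψ.2.2.1 x a) x)
        - ∑ a, (phibg x a * Ψ.1 x a - Ψ.1 x a * phibg x a),
    fun x a =>
      (Ψ.2.2.2 x * phibg x a - phibg x a * Ψ.2.2.2 x) - Dcov Abg a Ψ.2.1 x
        - (∑ b, ∑ c, eps3 a b c • Dcov Abg b (fun x => Ψ.1 x c) x)
        + ∑ b, ∑ c, eps3 a b c • (phibg x b * Ψ.2.2.1 x c - Ψ.2.2.1 x c * phibg x b),
    fun x =>
      (∑ a, Dcov Abg a (fun x => Ψ.1 x a) x)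
        + ∑ a, (phibg x a * Ψ.2.2.1 x a - Ψ.2.2.1 x a * phibg x a) )

/-- The linear map `N(a, β, ϕ, γ) = (ϕ, γ, −a, −β)`. -/
def Nop {n : ℕ} (Ψ : Flds n) : Flds n :=
  (Ψ.2.2.1, Ψ.2.2.2, -Ψ.1, -Ψ.2.1)

theorem eps3_swap (a b c : Fin 3) : eps3 a c b = -eps3 a b c := by
  simp only [eps3]
  push_cast
  ring

/-- The covariant derivative is odd, with no differentiability assumption. -/
theorem Dcov_neg {n : ℕ} (Abg : (Fin 3 → ℝ) → Fin 3 → Matrix (Fin n) (Fin n) ℂ)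
    (a : Fin 3) (f : (Fin 3 → ℝ) → Matrix (Fin n) (Fin n) ℂ) (x : Fin 3 → ℝ) :
    Dcov Abg a (-f) x = -Dcov Abg a f x := by
  have h : pd3 a (-f) x = -pd3 a f x := deriv.fun_neg
  simp only [Dcov, h, Pi.neg_apply, mul_neg, neg_mul]
  abel

theorem Dcov_fun_neg {n : ℕ} (Abg : (Fin 3 → ℝ) → Fin 3 → Matrix (Fin n) (Fin n) ℂ)
    (a : Fin 3) (f : (Fin 3 → ℝ) → Matrix (Fin n) (Fin n) ℂ) (x : Fin 3 → ℝ) :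
    Dcov Abg a (fun x => -f x) x = -Dcov Abg a f x :=
  Dcov_neg Abg a f x

/-- The cross product of matrix-valued vectors built from the commutator is symmetric. -/
theorem sum_eps3_smul_commutator_comm {n : ℕ} (a : Fin 3)
    (u v : Fin 3 → Matrix (Fin n) (Fin n) ℂ) :
    ∑ b, ∑ c, eps3 a b c • (u b * v c - v c * u b) =
      ∑ b, ∑ c, eps3 a b c • (v b * u c - u c * v b) := by
  rw [Finset.sum_comm]
  refine Finset.sum_congr rfl fun b _ => Finset.sum_congr rfl fun c _ => ?_
  rw [eps3_swap, neg_smul, ← smul_neg, neg_sub]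

/-- Pseudo skew-adjointness: `B(NΨ) = −N(BΨ)` for every differentiable `Ψ`. Hence the
linearized gauge-fixed KW operator `L = ∂_y + B` around any background with
`φ_y = A_y = 0` satisfies `L† = −N L N⁻¹` (since `N² = −1` and `∂_y` commutes with `N`). -/
theorem pseudo_skew_adjointness {n : ℕ} (U : Set (Fin 3 → ℝ)) (hU : IsOpen U)
    (Abg phibg : (Fin 3 → ℝ) → Fin 3 → Matrix (Fin n) (Fin n) ℂ)
    (Ψ : Flds n)
    (hdiff : ∀ x ∈ U,
      (∀ c, DifferentiableAt ℝ (fun x => Ψ.1 x c) x)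
        ∧ DifferentiableAt ℝ Ψ.2.1 x
        ∧ (∀ c, DifferentiableAt ℝ (fun x => Ψ.2.2.1 x c) x)
        ∧ DifferentiableAt ℝ Ψ.2.2.2 x) :
    ∀ x ∈ U,
      (∀ a, (Bop Abg phibg (Nop Ψ)).1 x a = (-(Nop (Bop Abg phibg Ψ)).1) x a)
        ∧ (Bop Abg phibg (Nop Ψ)).2.1 x = (-(Nop (Bop Abg phibg Ψ)).2.1) x
        ∧ (∀ a, (Bop Abg phibg (Nop Ψ)).2.2.1 x a = (-(Nop (Bop Abg phibg Ψ)).2.2.1) x a)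
        ∧ (Bop Abg phibg (Nop Ψ)).2.2.2 x = (-(Nop (Bop Abg phibg Ψ)).2.2.2) x := by
  intro x _
  refine ⟨fun a => ?_, ?_, fun a => ?_, ?_⟩
  · simp only [Bop, Nop, Pi.neg_apply, Dcov_neg, Dcov_fun_neg, smul_add, smul_neg,
      Finset.sum_add_distrib, Finset.sum_neg_distrib,
      sum_eps3_smul_commutator_comm a (Ψ.2.2.1 x) (phibg x)]
    abel
  · simp only [Bop, Nop, Pi.neg_apply, Dcov_fun_neg, Finset.sum_neg_distrib]
    abel
  · simp only [Bop, Nop, Pi.neg_apply, Dcov_neg, neg_neg, smul_add,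
      Finset.sum_add_distrib, sum_eps3_smul_commutator_comm a (Ψ.1 x) (phibg x),
      mul_neg, neg_mul, ← neg_sub', smul_neg, Finset.sum_neg_distrib]
    abel
  · simp only [Bop, Nop, Pi.neg_apply, mul_neg, neg_mul, ← neg_sub', neg_neg,
      Finset.sum_neg_distrib]
    abel
end

section
/- Uniqueness of the Nahm pole solution on the half-space. Let t₁, t₂, t₃ be skew-Hermitian matrices satisfying the su(2) commutation relations, let Ω = {x ∈ ℝ⁴ : x₄ > 0}, and let A, φ : Ω → (Fin 4 → Matrix (Fin n) (Fin n) ℂ) be smooth, skew-Hermitian-valued, and satisfy the KW equations on Ω. Suppose there exist C > 0 and δ ∈ (0,1) such that for every x ∈ Ω, writing y = x₄ and r = ‖x‖ and using the Frobenius norm: (a) ‖φ_a(x) − y⁻¹ t_a‖ ≤ C·min(y^δ, r^{−1−δ}) for a = 1,2,3; (b) ‖φ₄(x)‖ ≤ C·y^{1+δ}·(1+r)^{−3−2δ}; (c) ‖F_{ab}(x)‖ ≤ C·min(y^{1+δ}, r^{−2−δ}) for a,b ∈ {1,2,3}; (d) ‖D_aφ_b(x)‖ ≤ C·min(y^{δ},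 r^{−2−δ}) for a,b ∈ {1,2,3}; (e) ‖D_aφ₄(x)‖ ≤ C·min(y^{1+δ}, r^{−2−δ}) for a = 1,2,3 and ‖D₄φ₄(x)‖ ≤ C·min(y^{δ}, r^{−2−δ}); (f) ‖D₄φ_a(x) + y⁻² t_a‖ ≤ C·min(1, r^{−2−δ}) for a = 1,2,3. Then on all of Ω: F_{ij} = 0 for all i,j; φ₄ = 0; D_iφ₄ = 0 for all i; [φ₄, φ_a] = 0 and D_aφ_b = 0 for all a,b ∈ {1,2,3}; and D₄φ_a + (1/2) Σ_{b,c} ε_{abc} [φ_b, φ_c] = 0 for a = 1,2,3. (Thus the solution is flat, the fields φ_a are independent of x₁,x₂,x₃ up to gauge, and they solve Nahm's equations in y; i.e., the solution is the Nahm pole solution up to gauge.) -/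
open Matrix

attribute [local instance] Matrix.normedAddCommGroup Matrix.normedSpace

/-- The Frobenius norm `‖X‖ = √(tr(XᴴX))` of a complex matrix. -/
noncomputable def frob {n : ℕ} (X : Matrix (Fin n) (Fin n) ℂ) : ℝ :=
  Real.sqrt ((Matrix.trace (Xᴴ * X)).re)

/-- The Euclidean norm on `ℝ⁴`. -/
noncomputable def nrm (x : Fin 4 → ℝ) : ℝ :=
  Real.sqrt (∑ i, x i ^ 2)

/-- The embedding `{1,2,3} ⊂ {1,2,3,4}` of the boundary directions. -/
abbrev sp : Fin 3 → Fin 4 := Fin.castSucc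

open MeasureTheory Set Filter Topology

lemma abs_apply_le_nrm (x : Fin 4 → ℝ) (i : Fin 4) : |x i| ≤ nrm x := by
  rw [nrm, ← Real.sqrt_sq_eq_abs]
  exact Real.sqrt_le_sqrt
    (Finset.single_le_sum (f := fun j => x j ^ 2) (fun j _ => sq_nonneg (x j)) (Finset.mem_univ i))

lemma min_le_rpow_mul_rpow {a b θ : ℝ} (ha : 0 < a) (hb : 0 < b) (h0 : 0 ≤ θ) (h1 : θ ≤ 1) :
    min a b ≤ a ^ θ * b ^ (1 - θ) := by
  have hm : 0 < min a b := lt_min ha hb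
  calc min a b = (min a b) ^ θ * (min a b) ^ (1 - θ) := by
        rw [← Real.rpow_add hm]; simp
    _ ≤ a ^ θ * b ^ (1 - θ) := by
        gcongr
        · exact min_le_left _ _
        · exact min_le_right _ _

lemma setIntegral_Icc_last (a b : Fin 3 → ℝ) (hab : a ≤ b) (f : ℝ → ℝ) :
    ∫ z in Icc a b, f (z 2) = (b 0 - a 0) * (b 1 - a 1) * ∫ y in Icc (a 2) (b 2), f y := by
  have h := integral_fintype_prod_eq_prod (𝕜 := ℝ) (E := fun _ : Fin 3 => ℝ)
    ![fun _ => 1, fun _ => 1, f] (μ := fun i => volume.restrict (Icc (a i) (b i)))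
  rw [← Measure.restrict_pi_pi, Set.pi_univ_Icc, ← volume_pi] at h
  simp only [Fin.prod_univ_three, Matrix.cons_val_zero, Matrix.cons_val_one, Matrix.cons_val,
    one_mul] at h
  rw [h]
  simp [sub_nonneg.2 (hab 0), sub_nonneg.2 (hab 1)]

lemma setIntegral_rpow_le {ε L s : ℝ} (hε : 0 < ε) (hL : ε ≤ L) (hs : 0 < s) :
    ∫ y in Icc ε L, y ^ (s - 1) ≤ L ^ s / s := by
  rw [integral_Icc_eq_integral_Ioc, ← intervalIntegral.integral_of_le hL,
    integral_rpow (Or.inl (by linarith))]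
  simp only [sub_add_cancel]
  gcongr
  linarith [Real.rpow_nonneg hε.le s]

/-- The lower corner of the exhausting boxes of the half-space. -/
def boxLo (ε L : ℝ) : Fin 4 → ℝ := ![-L, -L, -L, ε]

/-- The upper corner of the exhausting boxes of the half-space. -/
def boxHi (L : ℝ) : Fin 4 → ℝ := ![L, L, L, L]

lemma norm_setIntegral_bottom_top_le {u : (Fin 4 → ℝ) → ℝ} {ε L c M : ℝ} (hL : 0 < L)
    (hu : ∀ x : Fin 4 → ℝ, x 3 = c → |u x| ≤ M) :
    |∫ z in Icc (boxLo ε L ∘ Fin.succAbove 3) (boxHi L ∘ Fin.succAbove 3),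
      u (Fin.insertNth 3 c z)| ≤ M * (8 * L ^ 3) := by
  have hle : boxLo ε L ∘ Fin.succAbove 3 ≤ boxHi L ∘ Fin.succAbove 3 := by
    intro i
    fin_cases i <;> simp [boxLo, boxHi, Fin.succAbove, Fin.lt_def] <;> linarith
  have h := norm_setIntegral_le_of_norm_le_const (μ := volume) (C := M)
    (s := Icc (boxLo ε L ∘ Fin.succAbove 3) (boxHi L ∘ Fin.succAbove 3))
    (f := fun z => u (Fin.insertNth 3 c z)) (isCompact_Icc.measure_lt_top)
    (fun z _ => hu _ (by simp))
  refine h.trans_eq ?_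
  rw [measureReal_def, Real.volume_Icc_pi_toReal hle]
  simp [Fin.prod_univ_three, boxLo, boxHi, Fin.succAbove, Fin.lt_def]
  left; ring

lemma norm_setIntegral_side_le {u : (Fin 4 → ℝ) → ℝ} {ε L c M s : ℝ} {i : Fin 4} (hi : i ≠ 3)
    (hε : 0 < ε) (hL : ε ≤ L) (hs : 0 < s) (hM : 0 ≤ M)
    (hu : ∀ x : Fin 4 → ℝ, 0 < x 3 → x i = c → |u x| ≤ M * x 3 ^ (s - 1)) :
    |∫ z in Icc (boxLo ε L ∘ i.succAbove) (boxHi L ∘ i.succAbove), u (i.insertNth c z)|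
      ≤ M * (4 * L ^ 2 * (L ^ s / s)) := by
  have h3 : i.succAbove 2 = 3 := by
    fin_cases i <;> first | rfl | exact absurd rfl hi
  set a := boxLo ε L ∘ i.succAbove with ha
  set b := boxHi L ∘ i.succAbove with hb
  have ha2 : a 2 = ε := by simp [ha, h3, boxLo]
  have hb2 : b 2 = L := by simp [hb, h3, boxHi]
  have hL0 : 0 < L := hε.trans_le hL
  have h01 : a 0 = -L ∧ a 1 = -L ∧ b 0 = L ∧ b 1 = L := by
    fin_cases i <;> simp [ha, hb, boxLo, boxHi, Fin.succAbove, Fin.lt_def] at hi ⊢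
  obtain ⟨ha0, ha1, hb0, hb1⟩ := h01
  have hle : a ≤ b := by
    intro j
    fin_cases j
    · change a 0 ≤ b 0; rw [ha0, hb0]; linarith
    · change a 1 ≤ b 1; rw [ha1, hb1]; linarith
    · change a 2 ≤ b 2; rw [ha2, hb2]; exact hL
  have hpos : ∀ z ∈ Icc a b, 0 < z 2 := fun z hz => by
    have := hz.1 2; rw [ha2] at this; linarith
  have hint : IntegrableOn (fun z : Fin 3 → ℝ => M * z 2 ^ (s - 1)) (Icc a b) := by
    refine ContinuousOn.integrableOn_compact isCompact_Icc ?_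
    refine continuousOn_const.mul (ContinuousOn.rpow_const (by fun_prop) ?_)
    intro z hz
    exact Or.inl (hpos z hz).ne'
  have h := norm_integral_le_of_norm_le (f := fun z => u (i.insertNth c z)) hint (by
    refine (ae_restrict_iff' measurableSet_Icc).2 (Eventually.of_forall fun z hz => ?_)
    have hz3 : (i.insertNth c z : Fin 4 → ℝ) 3 = z 2 := by
      rw [← h3, Fin.insertNth_apply_succAbove]
    have := hu (i.insertNth c z) (by rw [hz3]; exact hpos z hz) (by simp)
    rw [hz3] at this
    exact this)
  refine h.trans ?_
  rw [integral_const_mul, setIntegral_Icc_last a b hle (fun y => y ^ (s - 1)), ha0, ha1, hb0, hb1,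
    ha2, hb2]
  have := setIntegral_rpow_le hε hL hs
  have e : (L - -L) * (L - -L) = 4 * L ^ 2 := by ring
  rw [e]
  gcongr

/-- The total flux of a current with the stated decay out of a box in the half-space. -/
lemma setIntegral_box_le {J : Fin 4 → (Fin 4 → ℝ) → ℝ} {e : (Fin 4 → ℝ) → ℝ} {K δ : ℝ}
    (hδ0 : 0 < δ) (hδ1 : δ < 1) (hK : 0 ≤ K)
    (hJ : ∀ i, DifferentiableOn ℝ (J i) {x | 0 < x 3})
    (hec : ContinuousOn e {x | 0 < x 3})
    (hdiv : ∀ x : Fin 4 → ℝ, 0 < x 3 → ∑ i, fderiv ℝ (J i) x (Pi.single i 1) = -e x)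
    (hside : ∀ x : Fin 4 → ℝ, 0 < x 3 → ∀ i, i ≠ 3 →
      |J i x| ≤ K * min (x 3 ^ δ) (nrm x ^ (-(2 + δ))) / x 3)
    (hnormal : ∀ x : Fin 4 → ℝ, 0 < x 3 →
      |J 3 x| ≤ K * min (x 3 ^ (1 + δ)) (nrm x ^ (-(2 + δ))) / x 3)
    {ε L : ℝ} (hε : 0 < ε) (hεL : ε ≤ L) (hL : 1 ≤ L) :
    ∫ x in Icc (boxLo ε L) (boxHi L), e x ≤
      K * (8 * L ^ 3 * ε ^ δ) + K * (8 * L ^ (-δ)) + K * (192 / δ ^ 2 * L ^ (-(δ / 2))) := by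
  have hopen : IsOpen {x : Fin 4 → ℝ | 0 < x 3} := isOpen_lt continuous_const (continuous_apply 3)
  have hL0 : 0 < L := by linarith
  have hsub : Icc (boxLo ε L) (boxHi L) ⊆ {x : Fin 4 → ℝ | 0 < x 3} := fun x hx => by
    have := hx.1 3
    simp only [boxLo, Matrix.cons_val] at this
    exact hε.trans_le this
  have hle : boxLo ε L ≤ boxHi L := by
    intro j
    fin_cases j <;> simp [boxLo, boxHi] <;> linarith
  have hei : IntegrableOn e (Icc (boxLo ε L) (boxHi L)) :=
    (hec.mono hsub).integrableOn_compact isCompact_Icc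
  have hD := integral_divergence_of_hasFDerivAt_off_countable' (boxLo ε L) (boxHi L) hle J
    (fun i x => fderiv ℝ (J i) x) ∅ countable_empty (fun i => (hJ i).continuousOn.mono hsub)
    (fun x hx i => ((hJ i).differentiableAt (hopen.mem_nhds (hsub
      ⟨fun j => (hx.1 j (mem_univ j)).1.le, fun j => (hx.1 j (mem_univ j)).2.le⟩))).hasFDerivAt)
    (hei.neg.congr_fun (fun x hx => (hdiv x (hsub hx)).symm) measurableSet_Icc)
  rw [setIntegral_congr_fun (g := fun x => -e x) measurableSet_Icc
    (fun x hx => hdiv x (hsub hx)), integral_neg] at hD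
  set s := δ ^ 2 / 8 with hs
  set p := (2 + δ) * (1 - δ / 8) with hp
  have hs0 : 0 < s := by positivity
  have hp0 : 0 ≤ p := by apply mul_nonneg <;> linarith
  have hsidebd : ∀ i : Fin 4, i ≠ 3 → ∀ c : ℝ, |c| = L →
      |∫ z in Icc (boxLo ε L ∘ i.succAbove) (boxHi L ∘ i.succAbove), J i (i.insertNth c z)|
        ≤ K * L ^ (-p) * (4 * L ^ 2 * (L ^ s / s)) := by
    intro i hi c hc
    refine norm_setIntegral_side_le hi hε hεL hs0 (by positivity) fun x hx hxc => ?_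
    have hr : L ≤ nrm x := by rw [← hc, ← hxc]; exact abs_apply_le_nrm x i
    have hr0 : 0 < nrm x := hL0.trans_le hr
    refine (hside x hx i hi).trans ?_
    have h1 := min_le_rpow_mul_rpow (a := x 3 ^ δ) (b := nrm x ^ (-(2 + δ))) (θ := δ / 8)
      (by positivity) (by positivity) (by positivity) (by linarith)
    rw [← Real.rpow_mul hx.le, ← Real.rpow_mul hr0.le] at h1
    have h2 : nrm x ^ (-(2 + δ) * (1 - δ / 8)) ≤ L ^ (-p) := by
      rw [show -(2 + δ) * (1 - δ / 8) = -p by rw [hp]; ring]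
      exact Real.rpow_le_rpow_of_nonpos hL0 hr (by linarith)
    rw [show δ * (δ / 8) = s by rw [hs]; ring] at h1
    rw [Real.rpow_sub_one hx.ne', div_eq_mul_inv, div_eq_mul_inv, ← mul_assoc]
    gcongr ?_ * _
    rw [mul_assoc]
    gcongr
    refine h1.trans ?_
    rw [mul_comm]
    gcongr
  have hsidesimp : K * L ^ (-p) * (4 * L ^ 2 * (L ^ s / s)) ≤ K * (32 / δ ^ 2 * L ^ (-(δ / 2))) := by
    have h1 : L ^ (-p) * L ^ (2:ℝ) * L ^ s ≤ L ^ (-(δ / 2)) := by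
      rw [← Real.rpow_add hL0, ← Real.rpow_add hL0]
      apply Real.rpow_le_rpow_of_exponent_le hL
      rw [hp, hs]; nlinarith
    rw [Real.rpow_two] at h1
    have h2 : K * L ^ (-p) * (4 * L ^ 2 * (L ^ s / s))
        = K * (32 / δ ^ 2 * (L ^ (-p) * L ^ 2 * L ^ s)) := by
      rw [hs]; field_simp; ring
    rw [h2]
    gcongr
  have htop : |∫ z in Icc (boxLo ε L ∘ Fin.succAbove 3) (boxHi L ∘ Fin.succAbove 3),
      J 3 (Fin.insertNth 3 L z)| ≤ K * (8 * L ^ (-δ)) := by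
    refine (norm_setIntegral_bottom_top_le (M := K * L ^ (-(2 + δ)) / L) hL0 fun x hx => ?_).trans_eq ?_
    · have hr : L ≤ nrm x := by
        have := abs_apply_le_nrm x 3
        rw [hx, abs_of_pos hL0] at this
        exact this
      refine (hnormal x (by rw [hx]; exact hL0)).trans ?_
      rw [hx]
      gcongr
      exact (min_le_right _ _).trans (Real.rpow_le_rpow_of_nonpos hL0 hr (by linarith))
    · rw [show -(2 + δ) = -δ - 2 by ring, Real.rpow_sub hL0, Real.rpow_two]
      field_simp
  have hbot : |∫ z in Icc (boxLo ε L ∘ Fin.succAbove 3) (boxHi L ∘ Fin.succAbove 3),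
      J 3 (Fin.insertNth 3 ε z)| ≤ K * (8 * L ^ 3 * ε ^ δ) := by
    refine (norm_setIntegral_bottom_top_le (M := K * ε ^ δ) hL0 fun x hx => ?_).trans_eq (by ring)
    refine (hnormal x (by rw [hx]; exact hε)).trans ?_
    rw [hx, div_le_iff₀ hε, mul_assoc, ← Real.rpow_add_one hε.ne', add_comm δ 1]
    gcongr
    exact min_le_left _ _
  have hS : ∀ i : Fin 4, i ≠ 3 → ∀ c : ℝ, |c| = L →
      |∫ z in Icc (boxLo ε L ∘ i.succAbove) (boxHi L ∘ i.succAbove), J i (i.insertNth c z)|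
        ≤ K * (32 / δ ^ 2 * L ^ (-(δ / 2))) :=
    fun i hi c hc => (hsidebd i hi c hc).trans hsidesimp
  have absL : |L| = L := abs_of_pos hL0
  have absL' : |(-L)| = L := by rw [abs_neg, absL]
  have f0 := abs_le.1 (hS 0 (by decide) L absL)
  have f1 := abs_le.1 (hS 1 (by decide) L absL)
  have f2 := abs_le.1 (hS 2 (by decide) L absL)
  have g0 := abs_le.1 (hS 0 (by decide) (-L) absL')
  have g1 := abs_le.1 (hS 1 (by decide) (-L) absL')
  have g2 := abs_le.1 (hS 2 (by decide) (-L) absL')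
  have f3 := abs_le.1 htop
  have g3 := abs_le.1 hbot
  rw [Fin.sum_univ_four] at hD
  have e0 : boxLo ε L 0 = -L ∧ boxLo ε L 1 = -L ∧ boxLo ε L 2 = -L ∧ boxLo ε L 3 = ε := by
    simp [boxLo]
  have e1 : boxHi L 0 = L ∧ boxHi L 1 = L ∧ boxHi L 2 = L ∧ boxHi L 3 = L := by
    simp [boxHi]
  rw [e0.1, e0.2.1, e0.2.2.1, e0.2.2.2, e1.1, e1.2.1, e1.2.2.1, e1.2.2.2] at hD
  have hsplit : K * (192 / δ ^ 2 * L ^ (-(δ / 2))) = 6 * (K * (32 / δ ^ 2 * L ^ (-(δ / 2)))) := by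
    ring
  rw [hsplit]
  linarith [f0.1, f1.1, f2.1, f3.1, g0.2, g1.2, g2.2, g3.2]

/-- A nonnegative density on the half-space which is the divergence of a current with the stated
decay vanishes. -/
lemma density_eq_zero_of_decay {J : Fin 4 → (Fin 4 → ℝ) → ℝ} {e : (Fin 4 → ℝ) → ℝ} {K δ : ℝ}
    (hδ0 : 0 < δ) (hδ1 : δ < 1) (hK : 0 ≤ K)
    (hJ : ∀ i, DifferentiableOn ℝ (J i) {x | 0 < x 3})
    (hec : ContinuousOn e {x | 0 < x 3}) (he0 : ∀ x : Fin 4 → ℝ, 0 < x 3 → 0 ≤ e x)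
    (hdiv : ∀ x : Fin 4 → ℝ, 0 < x 3 → ∑ i, fderiv ℝ (J i) x (Pi.single i 1) = -e x)
    (hside : ∀ x : Fin 4 → ℝ, 0 < x 3 → ∀ i, i ≠ 3 →
      |J i x| ≤ K * min (x 3 ^ δ) (nrm x ^ (-(2 + δ))) / x 3)
    (hnormal : ∀ x : Fin 4 → ℝ, 0 < x 3 →
      |J 3 x| ≤ K * min (x 3 ^ (1 + δ)) (nrm x ^ (-(2 + δ))) / x 3)
    (x : Fin 4 → ℝ) (hx : 0 < x 3) : e x = 0 := by
  have hsub : ∀ {ε L : ℝ}, 0 < ε → Icc (boxLo ε L) (boxHi L) ⊆ {x : Fin 4 → ℝ | 0 < x 3} :=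
    fun {ε L} hε x hx => by
      have := hx.1 3
      simp only [boxLo, Matrix.cons_val] at this
      exact hε.trans_le this
  have hint : ∀ {ε L : ℝ}, 0 < ε → IntegrableOn e (Icc (boxLo ε L) (boxHi L)) := fun hε =>
    (hec.mono (hsub hε)).integrableOn_compact isCompact_Icc
  obtain ⟨ε₀, hε₀, hε₀x⟩ := exists_between hx
  obtain ⟨L₀, hL₀x⟩ : ∃ L₀ : ℝ, ∀ i, |x i| < L₀ := by
    refine ⟨nrm x + 1, fun i => ?_⟩
    linarith [abs_apply_le_nrm x i]
  have hbd : ∀ᶠ L : ℝ in atTop, ∫ x in Icc (boxLo ε₀ L₀) (boxHi L₀), e x ≤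
      K * (8 * L ^ (-1 : ℝ)) + K * (8 * L ^ (-δ)) + K * (192 / δ ^ 2 * L ^ (-(δ / 2))) := by
    have hlim : Tendsto (fun L : ℝ => L ^ (-(4 / δ))) atTop (𝓝 0) :=
      tendsto_rpow_neg_atTop (by positivity)
    filter_upwards [eventually_ge_atTop 1, eventually_ge_atTop L₀, eventually_ge_atTop ε₀,
      hlim.eventually_le_const hε₀] with L h1 h2 h3 h4
    have hL0 : 0 < L := by linarith
    have hε : 0 < L ^ (-(4 / δ)) := by positivity
    have h := setIntegral_box_le hδ0 hδ1 hK hJ hec hdiv hside hnormal hε (h4.trans h3) h1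
    have e1 : L ^ 3 * (L ^ (-(4 / δ))) ^ δ = L ^ (-1 : ℝ) := by
      rw [← Real.rpow_mul hL0.le, ← Real.rpow_natCast L 3, ← Real.rpow_add hL0]
      congr 1
      push_cast
      field_simp
      norm_num
    rw [mul_assoc 8, e1] at h
    refine le_trans ?_ h
    refine setIntegral_mono_set (hint hε) ?_ ?_
    · exact (ae_restrict_iff' measurableSet_Icc).2
        (Eventually.of_forall fun z hz => he0 z (hsub hε hz))
    · refine (Icc_subset_Icc ?_ ?_).eventuallyLE
      · intro j
        fin_cases j <;> simp [boxLo, h2, h4]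
      · intro j
        fin_cases j <;> simp [boxHi, h2]
  have hlim : Tendsto (fun L : ℝ => K * (8 * L ^ (-1 : ℝ)) + K * (8 * L ^ (-δ))
      + K * (192 / δ ^ 2 * L ^ (-(δ / 2)))) atTop (𝓝 0) := by
    have l1 := tendsto_rpow_neg_atTop (y := 1) one_pos
    have l2 := tendsto_rpow_neg_atTop hδ0
    have l3 := tendsto_rpow_neg_atTop (half_pos hδ0)
    simpa using (((l1.const_mul 8).const_mul K).add ((l2.const_mul 8).const_mul K)).add
      ((l3.const_mul (192 / δ ^ 2)).const_mul K)
  have hle : ∫ x in Icc (boxLo ε₀ L₀) (boxHi L₀), e x ≤ 0 := ge_of_tendsto hlim hbd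
  have hnn : 0 ≤ᵐ[volume.restrict (Icc (boxLo ε₀ L₀) (boxHi L₀))] e :=
    (ae_restrict_iff' measurableSet_Icc).2
      (Eventually.of_forall fun z hz => he0 z (hsub hε₀ hz))
  have hzero := (integral_eq_zero_iff_of_nonneg_ae hnn (hint hε₀)).1
    (le_antisymm hle (integral_nonneg_of_ae hnn))
  have hIoo : (univ.pi fun i => Ioo (boxLo ε₀ L₀ i) (boxHi L₀ i)) ⊆
      Icc (boxLo ε₀ L₀) (boxHi L₀) := fun z hz =>
    ⟨fun j => (hz j (mem_univ j)).1.le, fun j => (hz j (mem_univ j)).2.le⟩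
  refine Measure.eqOn_open_of_ae_eq (ae_restrict_of_ae_restrict_of_subset hIoo hzero)
    (isOpen_set_pi finite_univ fun i _ => isOpen_Ioo) (hec.mono (hIoo.trans (hsub hε₀)))
    continuousOn_const ?_
  intro j _
  have h0 := abs_lt.1 (hL₀x 0)
  have h1 := abs_lt.1 (hL₀x 1)
  have h2 := abs_lt.1 (hL₀x 2)
  have h3 := abs_lt.1 (hL₀x 3)
  fin_cases j <;> simp [boxLo, boxHi, *]

section calculus

variable {n : ℕ}

/-- The half-space `{x₄ > 0}`. -/
abbrev halfSpace : Set (Fin 4 → ℝ) := {x | 0 < x 3}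

lemma isOpen_halfSpace : IsOpen halfSpace := isOpen_lt continuous_const (continuous_apply 3)

/-- Matrix multiplication as a continuous real bilinear map. -/
noncomputable def mulCLM (n : ℕ) : Matrix (Fin n) (Fin n) ℂ →L[ℝ] Matrix (Fin n) (Fin n) ℂ →L[ℝ]
    Matrix (Fin n) (Fin n) ℂ :=
  (LinearMap.mul ℝ (Matrix (Fin n) (Fin n) ℂ)).toContinuousBilinearMap

/-- The pairing `-Re tr(XY)`, an invariant inner product on skew-Hermitian matrices. -/
noncomputable def ip (X Y : Matrix (Fin n) (Fin n) ℂ) : ℝ := -(Matrix.trace (X * Y)).re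

/-- The functional `-Re tr` as a continuous real linear map. -/
noncomputable def negReTrace (n : ℕ) : Matrix (Fin n) (Fin n) ℂ →L[ℝ] ℝ :=
  LinearMap.toContinuousLinearMap
    (-(Complex.reLm.comp (Matrix.traceLinearMap (Fin n) ℝ ℂ)))

lemma negReTrace_mul (X Y : Matrix (Fin n) (Fin n) ℂ) : negReTrace n (X * Y) = ip X Y := by
  simp [negReTrace, ip]

lemma ContDiffOn.matrix_mul {f g : (Fin 4 → ℝ) → Matrix (Fin n) (Fin n) ℂ}
    (hf : ContDiffOn ℝ (⊤ : ℕ∞) f halfSpace) (hg : ContDiffOn ℝ (⊤ : ℕ∞) g halfSpace) :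
    ContDiffOn ℝ (⊤ : ℕ∞) (fun x => f x * g x) halfSpace :=
  (mulCLM n).isBoundedBilinearMap.contDiff.comp_contDiffOn (hf.prodMk hg)

lemma ContDiffOn.ip {f g : (Fin 4 → ℝ) → Matrix (Fin n) (Fin n) ℂ}
    (hf : ContDiffOn ℝ (⊤ : ℕ∞) f halfSpace) (hg : ContDiffOn ℝ (⊤ : ℕ∞) g halfSpace) :
    ContDiffOn ℝ (⊤ : ℕ∞) (fun x => ip (f x) (g x)) halfSpace := by
  simp only [← negReTrace_mul]
  exact (negReTrace n).contDiff.comp_contDiffOn (hf.matrix_mul hg)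

lemma ContDiffOn.differentiableAt_halfSpace {E : Type*} [NormedAddCommGroup E] [NormedSpace ℝ E]
    {f : (Fin 4 → ℝ) → E} (hf : ContDiffOn ℝ (⊤ : ℕ∞) f halfSpace) {x : Fin 4 → ℝ}
    (hx : 0 < x 3) : DifferentiableAt ℝ f x :=
  (hf.contDiffAt (isOpen_halfSpace.mem_nhds hx)).differentiableAt (by simp)

lemma hasDerivAt_comp_update {E : Type*} [NormedAddCommGroup E] [NormedSpace ℝ E]
    {f : (Fin 4 → ℝ) → E} {x : Fin 4 → ℝ} (hf : DifferentiableAt ℝ f x) (i : Fin 4) :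
    HasDerivAt (fun t => f (Function.update x i t)) (fderiv ℝ f x (Pi.single i 1)) (x i) := by
  have h1 : HasFDerivAt f (fderiv ℝ f x) (Function.update x i (x i)) := by
    rw [Function.update_eq_self]; exact hf.hasFDerivAt
  exact h1.comp_hasDerivAt (x i) (hasDerivAt_update x i (x i))

lemma pd4_eq_fderiv {f : (Fin 4 → ℝ) → Matrix (Fin n) (Fin n) ℂ} {x : Fin 4 → ℝ}
    (hf : DifferentiableAt ℝ f x) (i : Fin 4) : pd4 i f x = fderiv ℝ f x (Pi.single i 1) :=
  (hasDerivAt_comp_update hf i).deriv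

lemma hasDerivAt_pd4 {f : (Fin 4 → ℝ) → Matrix (Fin n) (Fin n) ℂ} {x : Fin 4 → ℝ}
    (hf : DifferentiableAt ℝ f x) (i : Fin 4) :
    HasDerivAt (fun t => f (Function.update x i t)) (pd4 i f x) (x i) :=
  (hasDerivAt_comp_update hf i).differentiableAt.hasDerivAt

lemma contDiffOn_pd4 {f : (Fin 4 → ℝ) → Matrix (Fin n) (Fin n) ℂ}
    (hf : ContDiffOn ℝ (⊤ : ℕ∞) f halfSpace) (i : Fin 4) :
    ContDiffOn ℝ (⊤ : ℕ∞) (pd4 i f) halfSpace := by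
  have h : ContDiffOn ℝ (⊤ : ℕ∞) (fun x => fderiv ℝ f x (Pi.single i 1)) halfSpace :=
    (hf.fderiv_of_isOpen isOpen_halfSpace (by simp)).clm_apply contDiffOn_const
  exact h.congr fun x hx => pd4_eq_fderiv (hf.differentiableAt_halfSpace hx) i

lemma pd4_add {f g : (Fin 4 → ℝ) → Matrix (Fin n) (Fin n) ℂ} {x : Fin 4 → ℝ}
    (hf : DifferentiableAt ℝ f x) (hg : DifferentiableAt ℝ g x) (i : Fin 4) :
    pd4 i (fun x => f x + g x) x = pd4 i f x + pd4 i g x := by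
  exact ((hasDerivAt_pd4 hf i).add (hasDerivAt_pd4 hg i)).deriv

lemma pd4_sub {f g : (Fin 4 → ℝ) → Matrix (Fin n) (Fin n) ℂ} {x : Fin 4 → ℝ}
    (hf : DifferentiableAt ℝ f x) (hg : DifferentiableAt ℝ g x) (i : Fin 4) :
    pd4 i (fun x => f x - g x) x = pd4 i f x - pd4 i g x := by
  exact ((hasDerivAt_pd4 hf i).sub (hasDerivAt_pd4 hg i)).deriv

lemma DifferentiableAt.matrix_mul {f g : (Fin 4 → ℝ) → Matrix (Fin n) (Fin n) ℂ} {x : Fin 4 → ℝ}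
    (hf : DifferentiableAt ℝ f x) (hg : DifferentiableAt ℝ g x) :
    DifferentiableAt ℝ (fun x => f x * g x) x :=
  ((mulCLM n).hasFDerivAt_of_bilinear hf.hasFDerivAt hg.hasFDerivAt).differentiableAt

lemma pd4_mul {f g : (Fin 4 → ℝ) → Matrix (Fin n) (Fin n) ℂ} {x : Fin 4 → ℝ}
    (hf : DifferentiableAt ℝ f x) (hg : DifferentiableAt ℝ g x) (i : Fin 4) :
    pd4 i (fun x => f x * g x) x = f x * pd4 i g x + pd4 i f x * g x := by
  rw [pd4_eq_fderiv hf, pd4_eq_fderiv hg, pd4_eq_fderiv (hf.matrix_mul hg)]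
  have h := ((mulCLM n).hasFDerivAt_of_bilinear hf.hasFDerivAt hg.hasFDerivAt).fderiv
  exact congrArg (fun l => l (Pi.single i 1)) h

lemma fderiv_fderiv_apply {E : Type*} [NormedAddCommGroup E] [NormedSpace ℝ E]
    {f : (Fin 4 → ℝ) → E} {x : Fin 4 → ℝ} (hd : DifferentiableAt ℝ (fderiv ℝ f) x)
    (v w : Fin 4 → ℝ) :
    fderiv ℝ (fun y => fderiv ℝ f y v) x w = fderiv ℝ (fderiv ℝ f) x w v := by
  rw [fderiv_clm_apply hd (differentiableAt_const _)]
  simp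

lemma pd4_comm {f : (Fin 4 → ℝ) → Matrix (Fin n) (Fin n) ℂ}
    (hf : ContDiffOn ℝ (⊤ : ℕ∞) f halfSpace) {x : Fin 4 → ℝ} (hx : 0 < x 3) (i j : Fin 4) :
    pd4 i (pd4 j f) x = pd4 j (pd4 i f) x := by
  have hd : DifferentiableAt ℝ (fderiv ℝ f) x :=
    ((hf.fderiv_of_isOpen (m := 1) isOpen_halfSpace (by norm_cast)).contDiffAt
      (isOpen_halfSpace.mem_nhds hx)).differentiableAt (by simp)
  have key : ∀ i j : Fin 4, pd4 i (pd4 j f) x =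
      fderiv ℝ (fderiv ℝ f) x (Pi.single i 1) (Pi.single j 1) := by
    intro i j
    rw [pd4_eq_fderiv ((contDiffOn_pd4 hf j).differentiableAt_halfSpace hx)]
    have he : pd4 j f =ᶠ[𝓝 x] fun y => fderiv ℝ f y (Pi.single j 1) := by
      filter_upwards [isOpen_halfSpace.mem_nhds hx] with y hy
      exact pd4_eq_fderiv (hf.differentiableAt_halfSpace hy) j
    rw [he.fderiv_eq]
    exact fderiv_fderiv_apply hd _ _
  rw [key, key]
  exact ((hf.contDiffAt (isOpen_halfSpace.mem_nhds hx)).isSymmSndFDerivAt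
    (by simp only [minSmoothness_of_isRCLikeNormedField]; norm_cast)) _ _

/-- The covariant derivative of a matrix-valued field in the adjoint representation. -/
noncomputable def adD (A : (Fin 4 → ℝ) → Fin 4 → Matrix (Fin n) (Fin n) ℂ) (i : Fin 4)
    (f : (Fin 4 → ℝ) → Matrix (Fin n) (Fin n) ℂ) (x : Fin 4 → ℝ) : Matrix (Fin n) (Fin n) ℂ :=
  pd4 i f x + (A x i * f x - f x * A x i)

variable {A φ : (Fin 4 → ℝ) → Fin 4 → Matrix (Fin n) (Fin n) ℂ}

lemma contDiffOn_adD (hA : ∀ i, ContDiffOn ℝ (⊤ : ℕ∞) (fun x => A x i) halfSpace)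
    {f : (Fin 4 → ℝ) → Matrix (Fin n) (Fin n) ℂ}
    (hf : ContDiffOn ℝ (⊤ : ℕ∞) f halfSpace) (i : Fin 4) :
    ContDiffOn ℝ (⊤ : ℕ∞) (adD A i f) halfSpace :=
  (contDiffOn_pd4 hf i).add (((hA i).matrix_mul hf).sub (hf.matrix_mul (hA i)))

lemma contDiffOn_covD (hA : ∀ i, ContDiffOn ℝ (⊤ : ℕ∞) (fun x => A x i) halfSpace)
    (hφ : ∀ i, ContDiffOn ℝ (⊤ : ℕ∞) (fun x => φ x i) halfSpace) (i j : Fin 4) :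
    ContDiffOn ℝ (⊤ : ℕ∞) (covD A φ i j) halfSpace :=
  contDiffOn_adD hA (hφ j) i

lemma contDiffOn_curv (hA : ∀ i, ContDiffOn ℝ (⊤ : ℕ∞) (fun x => A x i) halfSpace)
    (i j : Fin 4) : ContDiffOn ℝ (⊤ : ℕ∞) (curv A i j) halfSpace :=
  ((contDiffOn_pd4 (hA j) i).sub (contDiffOn_pd4 (hA i) j)).add
    (((hA i).matrix_mul (hA j)).sub ((hA j).matrix_mul (hA i)))

lemma pd4_bracket {f g : (Fin 4 → ℝ) → Matrix (Fin n) (Fin n) ℂ} {x : Fin 4 → ℝ}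
    (hf : DifferentiableAt ℝ f x) (hg : DifferentiableAt ℝ g x) (i : Fin 4) :
    pd4 i (fun x => f x * g x - g x * f x) x =
      f x * pd4 i g x + pd4 i f x * g x - (g x * pd4 i f x + pd4 i g x * f x) := by
  rw [pd4_sub (hf.matrix_mul hg) (hg.matrix_mul hf), pd4_mul hf hg, pd4_mul hg hf]

lemma pd4_adD (hA : ∀ i, ContDiffOn ℝ (⊤ : ℕ∞) (fun x => A x i) halfSpace)
    {f : (Fin 4 → ℝ) → Matrix (Fin n) (Fin n) ℂ} (hf : ContDiffOn ℝ (⊤ : ℕ∞) f halfSpace)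
    {x : Fin 4 → ℝ} (hx : 0 < x 3) (i j : Fin 4) :
    pd4 i (adD A j f) x = pd4 i (pd4 j f) x +
      (A x j * pd4 i f x + pd4 i (fun x => A x j) x * f x
        - (f x * pd4 i (fun x => A x j) x + pd4 i f x * A x j)) := by
  have hf' := hf.differentiableAt_halfSpace hx
  have hA' := (hA j).differentiableAt_halfSpace hx
  have h2 := (contDiffOn_pd4 hf j).differentiableAt_halfSpace hx
  rw [← pd4_bracket hA' hf' i]
  exact pd4_add h2 ((hA'.matrix_mul hf').sub (hf'.matrix_mul hA')) i

/-- The commutator of covariant derivatives is the bracket with the curvature. -/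
lemma adD_comm (hA : ∀ i, ContDiffOn ℝ (⊤ : ℕ∞) (fun x => A x i) halfSpace)
    {f : (Fin 4 → ℝ) → Matrix (Fin n) (Fin n) ℂ} (hf : ContDiffOn ℝ (⊤ : ℕ∞) f halfSpace)
    {x : Fin 4 → ℝ} (hx : 0 < x 3) (i j : Fin 4) :
    adD A i (adD A j f) x = adD A j (adD A i f) x + (curv A i j x * f x - f x * curv A i j x) := by
  rw [adD, pd4_adD hA hf hx, adD, adD, pd4_adD hA hf hx, pd4_comm hf hx j i, adD, curv]
  noncomm_ring

lemma pd4_curv (hA : ∀ i, ContDiffOn ℝ (⊤ : ℕ∞) (fun x => A x i) halfSpace)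
    {x : Fin 4 → ℝ} (hx : 0 < x 3) (k i j : Fin 4) :
    pd4 k (curv A i j) x = pd4 k (pd4 i (fun x => A x j)) x - pd4 k (pd4 j (fun x => A x i)) x +
      (A x i * pd4 k (fun x => A x j) x + pd4 k (fun x => A x i) x * A x j
        - (A x j * pd4 k (fun x => A x i) x + pd4 k (fun x => A x j) x * A x i)) := by
  have hi := (hA i).differentiableAt_halfSpace hx
  have hj := (hA j).differentiableAt_halfSpace hx
  have h1 := (contDiffOn_pd4 (hA j) i).differentiableAt_halfSpace hx
  have h2 := (contDiffOn_pd4 (hA i) j).differentiableAt_halfSpace hx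
  rw [← pd4_bracket hi hj k, ← pd4_sub h1 h2]
  exact pd4_add (h1.sub h2) ((hi.matrix_mul hj).sub (hj.matrix_mul hi)) k

/-- The Bianchi identity. -/
lemma bianchi (hA : ∀ i, ContDiffOn ℝ (⊤ : ℕ∞) (fun x => A x i) halfSpace)
    {x : Fin 4 → ℝ} (hx : 0 < x 3) (i j k : Fin 4) :
    adD A i (curv A j k) x + adD A j (curv A k i) x + adD A k (curv A i j) x = 0 := by
  rw [adD, adD, adD, pd4_curv hA hx, pd4_curv hA hx, pd4_curv hA hx,
    pd4_comm (hA k) hx j i, pd4_comm (hA j) hx k i, pd4_comm (hA i) hx k j, curv, curv, curv]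
  noncomm_ring

lemma ip_comm (X Y : Matrix (Fin n) (Fin n) ℂ) : ip X Y = ip Y X := by
  rw [ip, ip, Matrix.trace_mul_comm]

lemma ip_add_left (X Y Z : Matrix (Fin n) (Fin n) ℂ) : ip (X + Y) Z = ip X Z + ip Y Z := by
  simp [ip, add_mul]; ring

lemma ip_neg_left (X Z : Matrix (Fin n) (Fin n) ℂ) : ip (-X) Z = -ip X Z := by
  simp [ip]

lemma ip_zero_left (Z : Matrix (Fin n) (Fin n) ℂ) : ip 0 Z = 0 := by
  simp [ip]

lemma ip_add_right (X Y Z : Matrix (Fin n) (Fin n) ℂ) : ip Z (X + Y) = ip Z X + ip Z Y := by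
  simp [ip, mul_add]; ring

lemma ip_sub_right (X Y Z : Matrix (Fin n) (Fin n) ℂ) : ip Z (X - Y) = ip Z X - ip Z Y := by
  simp [ip, mul_sub]; ring

lemma ip_neg_right (X Z : Matrix (Fin n) (Fin n) ℂ) : ip Z (-X) = -ip Z X := by
  simp [ip]

lemma ip_bracket (X Y Z : Matrix (Fin n) (Fin n) ℂ) :
    ip (X * Y - Y * X) Z = ip X (Y * Z - Z * Y) := by
  have h : Matrix.trace (Y * X * Z) = Matrix.trace (X * (Z * Y)) := by
    rw [Matrix.mul_assoc, Matrix.trace_mul_comm, Matrix.mul_assoc]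
  rw [ip, ip, sub_mul, mul_sub, Matrix.trace_sub, Matrix.trace_sub, h, Matrix.mul_assoc]

/-- The Leibniz rule for the invariant pairing and the covariant derivative. -/
lemma hasDerivAt_ip (A : (Fin 4 → ℝ) → Fin 4 → Matrix (Fin n) (Fin n) ℂ)
    {f g : (Fin 4 → ℝ) → Matrix (Fin n) (Fin n) ℂ} {x : Fin 4 → ℝ} (hx : 0 < x 3)
    (hf : ContDiffOn ℝ (⊤ : ℕ∞) f halfSpace) (hg : ContDiffOn ℝ (⊤ : ℕ∞) g halfSpace)
    (i : Fin 4) :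
    HasDerivAt (fun t => ip (f (Function.update x i t)) (g (Function.update x i t)))
      (ip (adD A i f x) (g x) + ip (f x) (adD A i g x)) (x i) := by
  have hf' := hf.differentiableAt_halfSpace hx
  have hg' := hg.differentiableAt_halfSpace hx
  have h := hasDerivAt_pd4 (hf'.matrix_mul hg') i
  rw [pd4_mul hf' hg'] at h
  have h2 := (negReTrace n).hasFDerivAt.comp_hasDerivAt (x i) h
  have e : negReTrace n (f x * pd4 i g x + pd4 i f x * g x)
      = ip (adD A i f x) (g x) + ip (f x) (adD A i g x) := by
    have h1 := ip_bracket (f x) (A x i) (g x)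
    rw [map_add, negReTrace_mul, negReTrace_mul, adD, adD, ip_add_left, ip_add_right]
    rw [← neg_sub (A x i * f x), ip_neg_left] at h1
    linarith
  exact (h2.congr_deriv e).congr_of_eventuallyEq
    (Eventually.of_forall fun t => (negReTrace_mul _ _).symm)

end calculus

section energy

variable {n : ℕ}

lemma weitzenboeck_algebra
    (P00 P01 P02 P03 P10 P11 P12 P13 P20 P21 P22 P23 P30 P31 P32 P33 F01 F20 F12 F03 F13 F23
      s0 s1 s2 c0 c1 c2 : Matrix (Fin n) (Fin n) ℂ)
    (k0 : F12 - s0 + (P03 - P30) = 0) (k1 : F20 - s1 + (P13 - P31) = 0)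
    (k2 : F01 - s2 + (P23 - P32) = 0) (l0 : F03 + c0 + (P12 - P21) = 0)
    (l1 : F13 + c1 + (P20 - P02) = 0) (l2 : F23 + c2 + (P01 - P10) = 0)
    (d : P00 + P11 + P22 + P33 = 0) :
    (ip P00 P11 - ip P10 P01) + (ip P00 P22 - ip P20 P02) + (ip P00 P33 - ip P30 P03)
      + (ip P11 P22 - ip P21 P12) + (ip P11 P33 - ip P31 P13) + (ip P22 P33 - ip P32 P23)
      - ip F01 s2 - ip F20 s1 - ip F12 s0 + ip F03 c0 + ip F13 c1 + ip F23 c2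
      + ip P03 F12 + ip P01 F23 - ip P02 F13 + ip P13 F20 + ip P12 F03 - ip P10 F23
      + ip P23 F01 + ip P20 F13 - ip P21 F03 - ip P30 F12 - ip P31 F20 - ip P32 F01
      - (ip P03 s0 + ip P13 s1 + ip P23 s2 - ip P01 c2 + ip P02 c1 - ip P12 c0 + ip P10 c2
        - ip P20 c1 + ip P21 c0)
    = -(1 / 2 * (ip F01 F01 + ip F20 F20 + ip F12 F12 + ip F03 F03 + ip F13 F13 + ip F23 F23
        + ip (P30 + s0) (P30 + s0) + ip (P31 + s1) (P31 + s1) + ip (P32 + s2) (P32 + s2)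
        + (ip P00 P00 + ip P01 P01 + ip P02 P02 + ip P10 P10 + ip P11 P11 + ip P12 P12
          + ip P20 P20 + ip P21 P21 + ip P22 P22)
        + (ip P03 P03 + ip P13 P13 + ip P23 P23 + ip P33 P33)
        + (ip c0 c0 + ip c1 c1 + ip c2 c2))) := by
  have sq : ∀ {X : Matrix (Fin n) (Fin n) ℂ}, X = 0 → ip X X = 0 := fun h => by
    rw [h, ip_zero_left]
  have k0 := sq k0
  have k1 := sq k1
  have k2 := sq k2
  have l0 := sq l0
  have l1 := sq l1
  have l2 := sq l2
  have d := sq d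
  simp only [ip_add_right, ip_sub_right, ip_comm] at *
  linear_combination (k0 + k1 + k2 + l0 + l1 + l2 + d) / 2

variable {A φ : (Fin 4 → ℝ) → Fin 4 → Matrix (Fin n) (Fin n) ℂ}

/-- The bracket `[φ_i, φ_j]` as a field. -/
abbrev brk (φ : (Fin 4 → ℝ) → Fin 4 → Matrix (Fin n) (Fin n) ℂ) (i j : Fin 4)
    (x : Fin 4 → ℝ) : Matrix (Fin n) (Fin n) ℂ :=
  φ x i * φ x j - φ x j * φ x i

/-- The current whose divergence is minus the energy density on solutions of the KW equations. -/
noncomputable def kwCurrent (A φ : (Fin 4 → ℝ) → Fin 4 → Matrix (Fin n) (Fin n) ℂ) :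
    Fin 4 → (Fin 4 → ℝ) → ℝ :=
  ![fun x => ip (φ x 0) (covD A φ 1 1 x) + ip (φ x 0) (covD A φ 2 2 x)
      + ip (φ x 0) (covD A φ 3 3 x) + ip (φ x 3) (curv A 1 2 x) + ip (φ x 1) (curv A 2 3 x)
      - ip (φ x 2) (curv A 1 3 x) - ip (φ x 3) (brk φ 1 2 x),
    fun x => -ip (φ x 0) (covD A φ 0 1 x) + ip (φ x 1) (covD A φ 2 2 x)
      + ip (φ x 1) (covD A φ 3 3 x) + ip (φ x 3) (curv A 2 0 x) + ip (φ x 2) (curv A 0 3 x)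
      - ip (φ x 0) (curv A 2 3 x) - ip (φ x 3) (brk φ 2 0 x),
    fun x => -ip (φ x 0) (covD A φ 0 2 x) - ip (φ x 1) (covD A φ 1 2 x)
      + ip (φ x 2) (covD A φ 3 3 x) + ip (φ x 3) (curv A 0 1 x) + ip (φ x 0) (curv A 1 3 x)
      - ip (φ x 1) (curv A 0 3 x) - ip (φ x 3) (brk φ 0 1 x),
    fun x => -ip (φ x 0) (covD A φ 0 3 x) - ip (φ x 1) (covD A φ 1 3 x)
      - ip (φ x 2) (covD A φ 2 3 x) - ip (φ x 0) (curv A 1 2 x) - ip (φ x 1) (curv A 2 0 x)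
      - ip (φ x 2) (curv A 0 1 x)]

/-- The energy density, a sum of squares of the quantities which vanish on the Nahm pole
solution. -/
noncomputable def kwDensity (A φ : (Fin 4 → ℝ) → Fin 4 → Matrix (Fin n) (Fin n) ℂ)
    (x : Fin 4 → ℝ) : ℝ :=
  let sq := fun X : Matrix (Fin n) (Fin n) ℂ => ip X X
  1 / 2 * (sq (curv A 0 1 x) + sq (curv A 2 0 x) + sq (curv A 1 2 x) + sq (curv A 0 3 x)
      + sq (curv A 1 3 x) + sq (curv A 2 3 x)
    + sq (covD A φ 3 0 x + brk φ 1 2 x) + sq (covD A φ 3 1 x + brk φ 2 0 x)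
      + sq (covD A φ 3 2 x + brk φ 0 1 x)
    + (sq (covD A φ 0 0 x) + sq (covD A φ 0 1 x) + sq (covD A φ 0 2 x)
      + sq (covD A φ 1 0 x) + sq (covD A φ 1 1 x) + sq (covD A φ 1 2 x)
      + sq (covD A φ 2 0 x) + sq (covD A φ 2 1 x) + sq (covD A φ 2 2 x))
    + (sq (covD A φ 0 3 x) + sq (covD A φ 1 3 x) + sq (covD A φ 2 3 x) + sq (covD A φ 3 3 x))
    + (sq (brk φ 3 0 x) + sq (brk φ 3 1 x) + sq (brk φ 3 2 x)))

lemma curv_swap (A : (Fin 4 → ℝ) → Fin 4 → Matrix (Fin n) (Fin n) ℂ) (i j : Fin 4)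
    (x : Fin 4 → ℝ) : curv A j i x = -curv A i j x := by
  simp only [curv]; abel

lemma adD_curv_swap (hA : ∀ i, ContDiffOn ℝ (⊤ : ℕ∞) (fun x => A x i) halfSpace)
    {x : Fin 4 → ℝ} (hx : 0 < x 3) (k i j : Fin 4) :
    adD A k (curv A j i) x = -adD A k (curv A i j) x := by
  rw [adD, adD, pd4_curv hA hx, pd4_curv hA hx, curv_swap A i j]
  noncomm_ring

lemma adD_brk (hφ : ∀ i, ContDiffOn ℝ (⊤ : ℕ∞) (fun x => φ x i) halfSpace)
    {x : Fin 4 → ℝ} (hx : 0 < x 3) (k i j : Fin 4) :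
    adD A k (brk φ i j) x = (covD A φ k i x * φ x j - φ x j * covD A φ k i x)
      + (φ x i * covD A φ k j x - covD A φ k j x * φ x i) := by
  have h : pd4 k (brk φ i j) x = _ := pd4_bracket ((hφ i).differentiableAt_halfSpace hx)
    ((hφ j).differentiableAt_halfSpace hx) k
  rw [adD, h, covD, covD]
  simp only [brk]
  noncomm_ring

lemma contDiffOn_brk (hφ : ∀ i, ContDiffOn ℝ (⊤ : ℕ∞) (fun x => φ x i) halfSpace)
    (i j : Fin 4) : ContDiffOn ℝ (⊤ : ℕ∞) (brk φ i j) halfSpace :=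
  ((hφ i).matrix_mul (hφ j)).sub ((hφ j).matrix_mul (hφ i))

lemma contDiffOn_kwCurrent (hA : ∀ i, ContDiffOn ℝ (⊤ : ℕ∞) (fun x => A x i) halfSpace)
    (hφ : ∀ i, ContDiffOn ℝ (⊤ : ℕ∞) (fun x => φ x i) halfSpace) (i : Fin 4) :
    ContDiffOn ℝ (⊤ : ℕ∞) (kwCurrent A φ i) halfSpace := by
  have p : ∀ i j k, ContDiffOn ℝ (⊤ : ℕ∞) (fun x => ip (φ x i) (covD A φ j k x)) halfSpace :=
    fun i j k => (hφ i).ip (contDiffOn_covD hA hφ j k)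
  have f : ∀ i j k, ContDiffOn ℝ (⊤ : ℕ∞) (fun x => ip (φ x i) (curv A j k x)) halfSpace :=
    fun i j k => (hφ i).ip (contDiffOn_curv hA j k)
  have s : ∀ i j k, ContDiffOn ℝ (⊤ : ℕ∞) (fun x => ip (φ x i) (brk φ j k x)) halfSpace :=
    fun i j k => (hφ i).ip (contDiffOn_brk hφ j k)
  fin_cases i
  · exact ((((((p 0 1 1).add (p 0 2 2)).add (p 0 3 3)).add (f 3 1 2)).add (f 1 2 3)).sub
      (f 2 1 3)).sub (s 3 1 2)
  · exact ((((((p 0 0 1).neg.add (p 1 2 2)).add (p 1 3 3)).add (f 3 2 0)).add (f 2 0 3)).sub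
      (f 0 2 3)).sub (s 3 2 0)
  · exact ((((((p 0 0 2).neg.sub (p 1 1 2)).add (p 2 3 3)).add (f 3 0 1)).add (f 0 1 3)).sub
      (f 1 0 3)).sub (s 3 0 1)
  · exact (((((p 0 0 3).neg.sub (p 1 1 3)).sub (p 2 2 3)).sub (f 0 1 2)).sub (f 1 2 0)).sub
      (f 2 0 1)

lemma contDiffOn_kwDensity (hA : ∀ i, ContDiffOn ℝ (⊤ : ℕ∞) (fun x => A x i) halfSpace)
    (hφ : ∀ i, ContDiffOn ℝ (⊤ : ℕ∞) (fun x => φ x i) halfSpace) :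
    ContDiffOn ℝ (⊤ : ℕ∞) (kwDensity A φ) halfSpace := by
  have p : ∀ j k, ContDiffOn ℝ (⊤ : ℕ∞)
      (fun x => ip (covD A φ j k x) (covD A φ j k x)) halfSpace :=
    fun j k => (contDiffOn_covD hA hφ j k).ip (contDiffOn_covD hA hφ j k)
  have f : ∀ j k, ContDiffOn ℝ (⊤ : ℕ∞) (fun x => ip (curv A j k x) (curv A j k x)) halfSpace :=
    fun j k => (contDiffOn_curv hA j k).ip (contDiffOn_curv hA j k)
  have s : ∀ j k, ContDiffOn ℝ (⊤ : ℕ∞) (fun x => ip (brk φ j k x) (brk φ j k x)) halfSpace :=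
    fun j k => (contDiffOn_brk hφ j k).ip (contDiffOn_brk hφ j k)
  have w : ∀ i j k, ContDiffOn ℝ (⊤ : ℕ∞) (fun x => ip (covD A φ 3 i x + brk φ j k x)
      (covD A φ 3 i x + brk φ j k x)) halfSpace := fun i j k =>
    have h := (contDiffOn_covD hA hφ 3 i).add (contDiffOn_brk hφ j k)
    h.ip h
  exact contDiffOn_const.mul ((((((((((((f 0 1).add (f 2 0)).add (f 1 2)).add (f 0 3)).add
    (f 1 3)).add (f 2 3)).add (w 0 1 2)).add (w 1 2 0)).add (w 2 0 1)).add
    (((((((((p 0 0).add (p 0 1)).add (p 0 2)).add (p 1 0)).add (p 1 1)).add (p 1 2)).add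
      (p 2 0)).add (p 2 1)).add (p 2 2))).add
    ((((p 0 3).add (p 1 3)).add (p 2 3)).add (p 3 3))).add (((s 3 0).add (s 3 1)).add (s 3 2)))

/-- The KW equations in components. -/
lemma kw_components {x : Fin 4 → ℝ}
    (h1 : ∀ i j : Fin 4, curv A i j x - (φ x i * φ x j - φ x j * φ x i)
        + ∑ k, ∑ l, eps4 i j k l • covD A φ k l x = 0)
    (h2 : ∑ i, covD A φ i i x = 0) :
    (curv A 1 2 x - brk φ 1 2 x + (covD A φ 0 3 x - covD A φ 3 0 x) = 0)
    ∧ (curv A 2 0 x - brk φ 2 0 x + (covD A φ 1 3 x - covD A φ 3 1 x) = 0)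
    ∧ (curv A 0 1 x - brk φ 0 1 x + (covD A φ 2 3 x - covD A φ 3 2 x) = 0)
    ∧ (curv A 0 3 x + brk φ 3 0 x + (covD A φ 1 2 x - covD A φ 2 1 x) = 0)
    ∧ (curv A 1 3 x + brk φ 3 1 x + (covD A φ 2 0 x - covD A φ 0 2 x) = 0)
    ∧ (curv A 2 3 x + brk φ 3 2 x + (covD A φ 0 1 x - covD A φ 1 0 x) = 0)
    ∧ (covD A φ 0 0 x + covD A φ 1 1 x + covD A φ 2 2 x + covD A φ 3 3 x = 0) := by
  rw [Fin.sum_univ_four] at h2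
  refine ⟨?_, ?_, ?_, ?_, ?_, ?_, h2⟩
  · rw [← h1 1 2]; simp [Fin.sum_univ_four, eps4, brk]; norm_num; abel
  · rw [← h1 2 0]; simp [Fin.sum_univ_four, eps4, brk]; norm_num; abel
  · rw [← h1 0 1]; simp [Fin.sum_univ_four, eps4, brk]; norm_num; abel
  · rw [← h1 0 3]; simp [Fin.sum_univ_four, eps4, brk]; norm_num; abel
  · rw [← h1 1 3]; simp [Fin.sum_univ_four, eps4, brk]; norm_num; abel
  · rw [← h1 2 3]; simp [Fin.sum_univ_four, eps4, brk]; norm_num; abel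

lemma ip_adD_comm (hA : ∀ i, ContDiffOn ℝ (⊤ : ℕ∞) (fun x => A x i) halfSpace)
    (hφ : ∀ i, ContDiffOn ℝ (⊤ : ℕ∞) (fun x => φ x i) halfSpace)
    {x : Fin 4 → ℝ} (hx : 0 < x 3) (i j : Fin 4) :
    ip (φ x i) (adD A i (covD A φ j j) x) =
      ip (φ x i) (adD A j (covD A φ i j) x) + ip (curv A i j x) (brk φ j i x) := by
  have h : adD A i (covD A φ j j) x = adD A j (covD A φ i j) x + _ := adD_comm hA (hφ j) hx i j
  rw [h, ip_add_right, ip_comm (φ x i) (_ - _), ip_bracket]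

lemma ip_bracket_left (X Y Z : Matrix (Fin n) (Fin n) ℂ) :
    ip X (Y * Z - Z * Y) = ip Z (X * Y - Y * X) := by
  rw [← ip_bracket, ip_comm]

lemma divergence_kwCurrent (hA : ∀ i, ContDiffOn ℝ (⊤ : ℕ∞) (fun x => A x i) halfSpace)
    (hφ : ∀ i, ContDiffOn ℝ (⊤ : ℕ∞) (fun x => φ x i) halfSpace)
    {x : Fin 4 → ℝ} (hx : 0 < x 3)
    (h1 : ∀ i j : Fin 4, curv A i j x - (φ x i * φ x j - φ x j * φ x i)
        + ∑ k, ∑ l, eps4 i j k l • covD A φ k l x = 0)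
    (h2 : ∑ i, covD A φ i i x = 0) :
    ∑ i, fderiv ℝ (kwCurrent A φ i) x (Pi.single i 1) = -kwDensity A φ x := by
  have uniq : ∀ (i : Fin 4) (v : ℝ),
      HasDerivAt (fun t => kwCurrent A φ i (Function.update x i t)) v (x i) →
      fderiv ℝ (kwCurrent A φ i) x (Pi.single i 1) = v := fun i v hv =>
    (hasDerivAt_comp_update ((contDiffOn_kwCurrent hA hφ i).differentiableAt_halfSpace hx) i).unique
      hv
  have p := fun m i j k => hasDerivAt_ip A hx (hφ i) (contDiffOn_covD hA hφ j k) m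
  have f := fun m i j k => hasDerivAt_ip A hx (hφ i) (contDiffOn_curv hA j k) m
  have s := fun m i j k => hasDerivAt_ip A hx (hφ i) (contDiffOn_brk hφ j k) m
  have d0 := uniq 0 _ (((((((p 0 0 1 1).add (p 0 0 2 2)).add (p 0 0 3 3)).add (f 0 3 1 2)).add
    (f 0 1 2 3)).sub (f 0 2 1 3)).sub (s 0 3 1 2))
  have d1 := uniq 1 _ (((((((p 1 0 0 1).neg.add (p 1 1 2 2)).add (p 1 1 3 3)).add (f 1 3 2 0)).add
    (f 1 2 0 3)).sub (f 1 0 2 3)).sub (s 1 3 2 0))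
  have d2 := uniq 2 _ (((((((p 2 0 0 2).neg.sub (p 2 1 1 2)).add (p 2 2 3 3)).add (f 2 3 0 1)).add
    (f 2 0 1 3)).sub (f 2 1 0 3)).sub (s 2 3 0 1))
  have d3 := uniq 3 _ ((((((p 3 0 0 3).neg.sub (p 3 1 1 3)).sub (p 3 2 2 3)).sub (f 3 0 1 2)).sub
    (f 3 1 2 0)).sub (f 3 2 0 1))
  have e : ∀ i j, adD A i (fun y => φ y j) x = covD A φ i j x := fun i j => rfl
  simp only [e] at d0 d1 d2 d3
  obtain ⟨k0, k1, k2, l0, l1, l2, d⟩ := kw_components h1 h2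
  have alg := weitzenboeck_algebra _ _ _ _ _ _ _ _ _ _ _ _ _ _ _ _ _ _ _ _ _ _ _ _ _ _ _ _
    k0 k1 k2 l0 l1 l2 d
  have b : ∀ m i j k, ip (φ x m) (adD A i (curv A j k) x) + ip (φ x m) (adD A j (curv A k i) x)
      + ip (φ x m) (adD A k (curv A i j) x) = 0 := fun m i j k => by
    rw [← ip_add_right, ← ip_add_right, bianchi hA hx, ip_comm, ip_zero_left]
  have b0 := b 0 1 2 3
  have b1 := b 1 0 2 3
  have b2 := b 2 0 1 3
  have b3 := b 3 0 1 2
  simp only [adD_curv_swap hA hx _ 1 3, adD_curv_swap hA hx _ 0 3, adD_curv_swap hA hx _ 2 0,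
    ip_neg_right] at b0 b1 b2 b3
  have c01 := ip_adD_comm hA hφ hx 0 1
  have c02 := ip_adD_comm hA hφ hx 0 2
  have c03 := ip_adD_comm hA hφ hx 0 3
  have c12 := ip_adD_comm hA hφ hx 1 2
  have c13 := ip_adD_comm hA hφ hx 1 3
  have c23 := ip_adD_comm hA hφ hx 2 3
  have brk_swap : ∀ i j, brk φ j i x = -brk φ i j x := fun i j => (neg_sub _ _).symm
  rw [brk_swap 0 1, ip_neg_right] at c01
  rw [curv_swap A 2 0, ip_neg_left] at c02
  rw [brk_swap 1 2, ip_neg_right] at c12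
  have S : ∀ m i j, ip (φ x 3) (adD A m (brk φ i j) x) =
      ip (covD A φ m j x) (brk φ 3 i x) - ip (covD A φ m i x) (brk φ 3 j x) := by
    intro m i j
    rw [adD_brk hφ hx, ip_add_right, ip_bracket_left (φ x 3) (φ x i),
      ← neg_sub (φ x j * _), ip_neg_right, ip_bracket_left (φ x 3) (φ x j)]
    ring
  rw [S] at d0 d1 d2
  rw [Fin.sum_univ_four, d0, d1, d2, d3, kwDensity]
  refine Eq.trans ?_ alg
  linear_combination c01 + c02 + c03 + c12 + c13 + c23 - b0 + b1 - b2 + b3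

end energy

section frobenius

variable {n : ℕ}

lemma frob_eq_frobenius_norm (X : Matrix (Fin n) (Fin n) ℂ) :
    frob X = @norm _ Matrix.frobeniusNormedAddCommGroup.toNorm X := by
  rw [Matrix.frobenius_norm_def, frob, Real.sqrt_eq_rpow, Matrix.trace, Finset.sum_comm]
  congr 1
  simp [Matrix.mul_apply, Complex.mul_re, ← Complex.normSq_eq_norm_sq, Complex.normSq_apply]

lemma frob_nonneg (X : Matrix (Fin n) (Fin n) ℂ) : 0 ≤ frob X := Real.sqrt_nonneg _

lemma frob_add_le (X Y : Matrix (Fin n) (Fin n) ℂ) : frob (X + Y) ≤ frob X + frob Y := by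
  simp only [frob_eq_frobenius_norm]
  let := @Matrix.frobeniusNormedAddCommGroup (Fin n) (Fin n) ℂ _ _ _
  exact norm_add_le X Y

lemma frob_neg (X : Matrix (Fin n) (Fin n) ℂ) : frob (-X) = frob X := by
  simp [frob]

lemma frob_sub_le (X Y : Matrix (Fin n) (Fin n) ℂ) : frob (X - Y) ≤ frob X + frob Y := by
  simpa only [sub_eq_add_neg, frob_neg] using frob_add_le X (-Y)

lemma frob_mul_le (X Y : Matrix (Fin n) (Fin n) ℂ) : frob (X * Y) ≤ frob X * frob Y := by
  simp only [frob_eq_frobenius_norm]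
  exact Matrix.frobenius_norm_mul X Y

lemma frob_bracket_le (X Y : Matrix (Fin n) (Fin n) ℂ) :
    frob (X * Y - Y * X) ≤ 2 * (frob X * frob Y) := by
  linarith [frob_sub_le (X * Y) (Y * X), frob_mul_le X Y, frob_mul_le Y X,
    mul_comm (frob X) (frob Y)]

lemma frob_smul (c : ℂ) (X : Matrix (Fin n) (Fin n) ℂ) : frob (c • X) = ‖c‖ * frob X := by
  simp only [frob_eq_frobenius_norm]
  let := @Matrix.frobeniusNormedAddCommGroup (Fin n) (Fin n) ℂ _ _ _
  let := @Matrix.frobeniusNormedSpace ℂ (Fin n) (Fin n) ℂ _ _ _ _ _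
  exact norm_smul c X

lemma frob_sq (X : Matrix (Fin n) (Fin n) ℂ) :
    frob X ^ 2 = ∑ p : Fin n × Fin n, ‖X p.1 p.2‖ ^ 2 := by
  rw [frob_eq_frobenius_norm, Matrix.frobenius_norm_def, ← Real.sqrt_eq_rpow,
    Real.sq_sqrt (by positivity), Fintype.sum_prod_type]
  simp

lemma abs_ip_le (X Y : Matrix (Fin n) (Fin n) ℂ) : |ip X Y| ≤ frob X * frob Y := by
  have h : |ip X Y| ≤ ∑ p : Fin n × Fin n, ‖X p.1 p.2‖ * ‖Y p.2 p.1‖ := by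
    rw [ip, abs_neg, Fintype.sum_prod_type]
    refine (Complex.abs_re_le_norm _).trans ?_
    simp only [Matrix.trace, Matrix.diag_apply, Matrix.mul_apply]
    refine (norm_sum_le _ _).trans (Finset.sum_le_sum fun i _ => (norm_sum_le _ _).trans ?_)
    simp
  have hY : frob Y ^ 2 = ∑ p : Fin n × Fin n, ‖Y p.2 p.1‖ ^ 2 := by
    rw [frob_sq, Fintype.sum_prod_type, Fintype.sum_prod_type, Finset.sum_comm]
  refine h.trans ((Real.sum_mul_le_sqrt_mul_sqrt _ _ _).trans_eq ?_)
  rw [← hY, ← frob_sq, Real.sqrt_sq (frob_nonneg X), Real.sqrt_sq (frob_nonneg Y)]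

lemma ip_self_eq_frob_sq {X : Matrix (Fin n) (Fin n) ℂ} (hX : Xᴴ = -X) : ip X X = frob X ^ 2 := by
  have h : ip X X = (Matrix.trace (Xᴴ * X)).re := by simp [ip, hX]
  have h0 : 0 ≤ (Matrix.trace (Xᴴ * X)).re := by
    rw [Matrix.trace, Complex.re_sum]
    refine Finset.sum_nonneg fun i _ => ?_
    simp only [Matrix.diag_apply, Matrix.mul_apply, Complex.re_sum]
    refine Finset.sum_nonneg fun j _ => ?_
    simpa [Complex.mul_re] using add_nonneg (mul_self_nonneg _) (mul_self_nonneg _)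
  rw [h, frob, Real.sq_sqrt h0]

lemma ip_self_nonneg {X : Matrix (Fin n) (Fin n) ℂ} (hX : Xᴴ = -X) : 0 ≤ ip X X := by
  rw [ip_self_eq_frob_sq hX]; positivity

lemma eq_zero_of_ip_self {X : Matrix (Fin n) (Fin n) ℂ} (hX : Xᴴ = -X) (h : ip X X = 0) :
    X = 0 := by
  rw [ip_self_eq_frob_sq hX, frob_sq,
    Finset.sum_eq_zero_iff_of_nonneg fun p _ => by positivity] at h
  ext i j
  simpa using h (i, j) (Finset.mem_univ _)

lemma conjTranspose_bracket {X Y : Matrix (Fin n) (Fin n) ℂ} (hX : Xᴴ = -X) (hY : Yᴴ = -Y) :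
    (X * Y - Y * X)ᴴ = -(X * Y - Y * X) := by
  simp [hX, hY]

/-- The conjugate transpose as a continuous real linear map. -/
noncomputable def conjTransposeCLM (n : ℕ) :
    Matrix (Fin n) (Fin n) ℂ →L[ℝ] Matrix (Fin n) (Fin n) ℂ :=
  LinearMap.toContinuousLinearMap
    (Matrix.conjTransposeLinearEquiv (Fin n) (Fin n) ℝ ℂ).toLinearMap

lemma conjTranspose_pd4 {f : (Fin 4 → ℝ) → Matrix (Fin n) (Fin n) ℂ}
    (hf : ContDiffOn ℝ (⊤ : ℕ∞) f halfSpace) (hskew : ∀ x : Fin 4 → ℝ, 0 < x 3 → (f x)ᴴ = -f x)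
    {x : Fin 4 → ℝ} (hx : 0 < x 3) (i : Fin 4) : (pd4 i f x)ᴴ = -pd4 i f x := by
  have h := hasDerivAt_pd4 (hf.differentiableAt_halfSpace hx) i
  have h1 := (conjTransposeCLM n).hasFDerivAt.comp_hasDerivAt (x i) h
  refine h1.unique (h.neg.congr_of_eventuallyEq ?_)
  have hc : ContinuousAt (fun t => Function.update x i t) (x i) := by fun_prop
  have hm : halfSpace ∈ 𝓝 (Function.update x i (x i)) := by
    rw [Function.update_eq_self]; exact isOpen_halfSpace.mem_nhds hx
  filter_upwards [hc.preimage_mem_nhds hm] with t ht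
  exact hskew _ ht

variable {A φ : (Fin 4 → ℝ) → Fin 4 → Matrix (Fin n) (Fin n) ℂ}

lemma conjTranspose_covD (hφ : ∀ i, ContDiffOn ℝ (⊤ : ℕ∞) (fun x => φ x i) halfSpace)
    (hAskew : ∀ x : Fin 4 → ℝ, 0 < x 3 → ∀ i, (A x i)ᴴ = -A x i)
    (hφskew : ∀ x : Fin 4 → ℝ, 0 < x 3 → ∀ i, (φ x i)ᴴ = -φ x i)
    {x : Fin 4 → ℝ} (hx : 0 < x 3) (i j : Fin 4) : (covD A φ i j x)ᴴ = -covD A φ i j x := by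
  rw [covD, Matrix.conjTranspose_add, conjTranspose_pd4 (hφ j) (fun x hx => hφskew x hx j) hx,
    conjTranspose_bracket (hAskew x hx i) (hφskew x hx j), neg_add]

lemma conjTranspose_curv (hA : ∀ i, ContDiffOn ℝ (⊤ : ℕ∞) (fun x => A x i) halfSpace)
    (hAskew : ∀ x : Fin 4 → ℝ, 0 < x 3 → ∀ i, (A x i)ᴴ = -A x i)
    {x : Fin 4 → ℝ} (hx : 0 < x 3) (i j : Fin 4) : (curv A i j x)ᴴ = -curv A i j x := by
  have h := fun i j => conjTranspose_pd4 (hA j) (fun x hx => hAskew x hx j) hx i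
  rw [curv, Matrix.conjTranspose_add, Matrix.conjTranspose_sub, h, h,
    conjTranspose_bracket (hAskew x hx i) (hAskew x hx j)]
  abel

end frobenius

section bounds

variable {n : ℕ}

lemma apply_three_le_nrm (x : Fin 4 → ℝ) : x 3 ≤ nrm x :=
  (le_abs_self _).trans (abs_apply_le_nrm x 3)

/-- A quantity bounded both by a nonnegative power of `y` and by `r ^ (-(k + δ))`, `y ≤ r`, is
bounded by `y ^ (-k)`. -/
lemma min_rpow_le_rpow_neg {y r δ p k : ℝ} (hy : 0 < y) (hr : y ≤ r) (hδ : 0 < δ) (hp : 0 ≤ p)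
    (hk : 0 ≤ k) : min (y ^ p) (r ^ (-(k + δ))) ≤ y ^ (-k) := by
  rcases le_total y 1 with h | h
  · exact (min_le_left _ _).trans ((Real.rpow_le_one hy.le h hp).trans
      (Real.one_le_rpow_of_pos_of_le_one_of_nonpos hy h (by linarith)))
  · exact (min_le_right _ _).trans ((Real.rpow_le_rpow_of_nonpos hy hr (by linarith)).trans
      (Real.rpow_le_rpow_of_exponent_le h (by linarith)))

lemma min_rpow_one_add_le {y r δ : ℝ} (hy : 0 < y) (hr : y ≤ r) (hδ : 0 < δ) :
    min (y ^ (1 + δ)) (r ^ (-(2 + δ))) ≤ min (y ^ δ) (r ^ (-(2 + δ))) := by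
  refine le_min ?_ (min_le_right _ _)
  rcases le_total y 1 with h | h
  · exact (min_le_left _ _).trans (Real.rpow_le_rpow_of_exponent_ge hy h (by linarith))
  · exact (min_le_right _ _).trans
      ((Real.rpow_le_one_of_one_le_of_nonpos (h.trans hr) (by linarith)).trans
        (Real.one_le_rpow h hδ.le))

lemma rpow_mul_rpow_le_mul_min {y r δ : ℝ} (hy : 0 < y) (hr : y ≤ r) (hδ : 0 < δ) :
    y ^ (1 + δ) * (1 + r) ^ (-(3 + 2 * δ)) ≤ y * min (y ^ δ) (r ^ (-(2 + δ))) := by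
  have hr0 : 0 < r := hy.trans_le hr
  have h1 : (1 : ℝ) ≤ 1 + r := by linarith
  rw [Real.rpow_add hy, Real.rpow_one, mul_assoc]
  refine mul_le_mul_of_nonneg_left (le_min ?_ ?_) hy.le
  · exact mul_le_of_le_one_right (Real.rpow_nonneg hy.le _)
      (Real.rpow_le_one_of_one_le_of_nonpos h1 (by linarith))
  · calc y ^ δ * (1 + r) ^ (-(3 + 2 * δ)) ≤ (1 + r) ^ δ * (1 + r) ^ (-(3 + 2 * δ)) := by
          gcongr; linarith
      _ = (1 + r) ^ (-(3 + δ)) := by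
          rw [← Real.rpow_add (by linarith)]; congr 1; ring
      _ ≤ (1 + r) ^ (-(2 + δ)) := Real.rpow_le_rpow_of_exponent_le h1 (by linarith)
      _ ≤ r ^ (-(2 + δ)) := Real.rpow_le_rpow_of_nonpos hr0 (by linarith) (by linarith)

lemma abs_ip_le_of_le {X Y : Matrix (Fin n) (Fin n) ℂ} {a b c : ℝ} (hX : frob X ≤ a)
    (hY : frob Y ≤ b) (h : a * b ≤ c) : |ip X Y| ≤ c :=
  (abs_ip_le X Y).trans
    ((mul_le_mul hX hY (frob_nonneg Y) ((frob_nonneg X).trans hX)).trans h)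

variable {A φ : (Fin 4 → ℝ) → Fin 4 → Matrix (Fin n) (Fin n) ℂ} {x : Fin 4 → ℝ} {y K m : ℝ}

lemma abs_kwCurrent_normal_le
    (hφ : ∀ a : Fin 3, frob (φ x (sp a)) ≤ K / y)
    (hF : ∀ a b : Fin 3, frob (curv A (sp a) (sp b) x) ≤ K * m)
    (hD : ∀ a : Fin 3, frob (covD A φ (sp a) 3 x) ≤ K * m) :
    |kwCurrent A φ 3 x| ≤ 6 * K ^ 2 * m / y := by
  have e : K / y * (K * m) ≤ K ^ 2 * m / y := le_of_eq (by ring)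
  have p := fun a b => abs_le.1 (abs_ip_le_of_le (hφ a) (hD b) e)
  have f := fun a b c => abs_le.1 (abs_ip_le_of_le (hφ a) (hF b c) e)
  have p0 := p 0 0
  have p1 := p 1 1
  have p2 := p 2 2
  have f0 := f 0 1 2
  have f1 := f 1 2 0
  have f2 := f 2 0 1
  have e6 : 6 * K ^ 2 * m / y = 6 * (K ^ 2 * m / y) := by ring
  rw [e6]
  change |-ip (φ x 0) (covD A φ 0 3 x) - ip (φ x 1) (covD A φ 1 3 x)
      - ip (φ x 2) (covD A φ 2 3 x) - ip (φ x 0) (curv A 1 2 x) - ip (φ x 1) (curv A 2 0 x)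
      - ip (φ x 2) (curv A 0 1 x)| ≤ _
  rw [abs_le]
  simp only [sp, Fin.reduceCastSucc] at p0 p1 p2 f0 f1 f2
  constructor <;> linarith

lemma abs_kwCurrent_side_le (hy : 0 < y) (hm : 0 ≤ m) (hK : 0 ≤ K)
    (hφ : ∀ a : Fin 3, frob (φ x (sp a)) ≤ K / y)
    (hφ3 : frob (φ x 3) ≤ K * (y * m)) (hmy : m ≤ y ^ (-2 : ℝ))
    (hF : ∀ a b : Fin 3, frob (curv A (sp a) (sp b) x) ≤ K * m)
    (hD : ∀ a b : Fin 3, frob (covD A φ (sp a) (sp b) x) ≤ K * m)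
    (hD3 : frob (covD A φ 3 3 x) ≤ K * m)
    (h1 : ∀ i j : Fin 4, curv A i j x - (φ x i * φ x j - φ x j * φ x i)
        + ∑ k, ∑ l, eps4 i j k l • covD A φ k l x = 0)
    (h2 : ∑ i, covD A φ i i x = 0) {i : Fin 4} (hi : i ≠ 3) :
    |kwCurrent A φ i x| ≤ 14 * (K ^ 2 + K ^ 3) * m / y := by
  set L := 2 * (K ^ 2 + K ^ 3) * m / y with hL
  have hKm : 0 ≤ K ^ 2 * m / y := by positivity
  have hKm3 : 0 ≤ K ^ 3 * m / y := by positivity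
  have hLe : L = 2 * (K ^ 2 * m / y) + 2 * (K ^ 3 * m / y) := by rw [hL]; ring
  obtain ⟨-, -, -, l0, l1, l2, -⟩ := kw_components h1 h2
  have hb3 : ∀ a : Fin 3, frob (brk φ 3 (sp a) x) ≤ 2 * K ^ 2 * m := fun a => by
    refine (frob_bracket_le _ _).trans ?_
    have := mul_le_mul hφ3 (hφ a) (frob_nonneg _) (by positivity)
    have e : K * (y * m) * (K / y) = K ^ 2 * m := by field_simp
    linarith
  have hb : ∀ a b : Fin 3, frob (brk φ (sp a) (sp b) x) ≤ 2 * K ^ 2 / y ^ 2 := fun a b => by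
    refine (frob_bracket_le _ _).trans ?_
    have := mul_le_mul (hφ a) (hφ b) (frob_nonneg _) (by positivity)
    have e : 2 * K ^ 2 / y ^ 2 = 2 * (K / y * (K / y)) := by field_simp
    linarith
  have hF3 : ∀ (a b c : Fin 3), curv A (sp a) 3 x + brk φ 3 (sp a) x
      + (covD A φ (sp b) (sp c) x - covD A φ (sp c) (sp b) x) = 0 →
      frob (curv A (sp a) 3 x) ≤ 2 * (K + K ^ 2) * m := fun a b c h => by
    have e : curv A (sp a) 3 x =
        -(brk φ 3 (sp a) x + (covD A φ (sp b) (sp c) x - covD A φ (sp c) (sp b) x)) := by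
      rw [add_assoc] at h
      exact eq_neg_of_add_eq_zero_left h
    rw [e, frob_neg]
    linarith [frob_add_le (brk φ 3 (sp a) x)
      (covD A φ (sp b) (sp c) x - covD A φ (sp c) (sp b) x),
      frob_sub_le (covD A φ (sp b) (sp c) x) (covD A φ (sp c) (sp b) x), hD b c, hD c b, hb3 a]
  have e1 : K / y * (K * m) ≤ L := by
    have : K / y * (K * m) = K ^ 2 * m / y := by ring
    linarith
  have p := fun a b c => abs_le.1 (abs_ip_le_of_le (hφ a) (hD b c) e1)
  have q := fun a => abs_le.1 (abs_ip_le_of_le (hφ a) hD3 e1)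
  have e2 : K / y * (2 * (K + K ^ 2) * m) ≤ L := le_of_eq (by rw [hL]; ring)
  have g0 := fun a => abs_le.1 (abs_ip_le_of_le (hφ a) (hF3 0 1 2 l0) e2)
  have g1 := fun a => abs_le.1 (abs_ip_le_of_le (hφ a) (hF3 1 2 0 l1) e2)
  have g2 := fun a => abs_le.1 (abs_ip_le_of_le (hφ a) (hF3 2 0 1 l2) e2)
  have e3 : K * (y * m) * (K * m) ≤ L := by
    have h : y ^ (-2 : ℝ) = 1 / y ^ 2 := by
      rw [Real.rpow_neg hy.le, one_div]; norm_cast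
    have h' : K ^ 2 * (y * m) * m ≤ K ^ 2 * (y * m) * (1 / y ^ 2) := by
      rw [← h]; gcongr
    have h'' : K ^ 2 * (y * m) * (1 / y ^ 2) = K ^ 2 * m / y := by field_simp
    linarith
  have f := fun a b => abs_le.1 (abs_ip_le_of_le hφ3 (hF a b) e3)
  have e4 : K * (y * m) * (2 * K ^ 2 / y ^ 2) ≤ L := by
    have : K * (y * m) * (2 * K ^ 2 / y ^ 2) = 2 * (K ^ 3 * m / y) := by field_simp
    linarith
  have s := fun a b => abs_le.1 (abs_ip_le_of_le hφ3 (hb a b) e4)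
  simp only [Fin.forall_fin_succ, Fin.reduceSucc, sp, IsEmpty.forall_iff, and_true,
    Fin.castSucc_zero, Fin.reduceCastSucc, Fin.castSucc_one] at p q g0 g1 g2 f s
  have e7 : 14 * (K ^ 2 + K ^ 3) * m / y = 7 * L := by rw [hL]; ring
  rw [e7, abs_le]
  fin_cases i
  · simp only [kwCurrent]; constructor <;> simp <;> linarith
  · simp only [kwCurrent]; constructor <;> simp <;> linarith
  · simp only [kwCurrent]; constructor <;> simp <;> linarith
  · exact absurd rfl hi

end bounds

section vanishing

variable {n : ℕ} {A φ : (Fin 4 → ℝ) → Fin 4 → Matrix (Fin n) (Fin n) ℂ}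

/-- Vanishing of the energy density forces each of its terms to vanish. -/
lemma eq_zero_of_kwDensity_eq_zero {x : Fin 4 → ℝ}
    (hF : ∀ i j, (curv A i j x)ᴴ = -curv A i j x)
    (hD : ∀ i j, (covD A φ i j x)ᴴ = -covD A φ i j x)
    (hB : ∀ i j, (brk φ i j x)ᴴ = -brk φ i j x) (h : kwDensity A φ x = 0) :
    (∀ i j, curv A i j x = 0) ∧ (∀ i, covD A φ i 3 x = 0) ∧ (∀ a : Fin 3, brk φ 3 (sp a) x = 0)
    ∧ (∀ a b : Fin 3, covD A φ (sp a) (sp b) x = 0)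
    ∧ covD A φ 3 0 x + brk φ 1 2 x = 0 ∧ covD A φ 3 1 x + brk φ 2 0 x = 0
    ∧ covD A φ 3 2 x + brk φ 0 1 x = 0 := by
  have hW : ∀ i j k, (covD A φ 3 i x + brk φ j k x)ᴴ = -(covD A φ 3 i x + brk φ j k x) :=
    fun i j k => by rw [Matrix.conjTranspose_add, hD, hB, neg_add]
  have f := fun i j => ip_self_nonneg (hF i j)
  have p := fun i j => ip_self_nonneg (hD i j)
  have b := fun i j => ip_self_nonneg (hB i j)
  have w := fun i j k => ip_self_nonneg (hW i j k)
  have zf := fun i j => eq_zero_of_ip_self (hF i j)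
  have zp := fun i j => eq_zero_of_ip_self (hD i j)
  have zb := fun i j => eq_zero_of_ip_self (hB i j)
  have zw := fun i j k => eq_zero_of_ip_self (hW i j k)
  have f01 := f 0 1
  have f20 := f 2 0
  have f12 := f 1 2
  have f03 := f 0 3
  have f13 := f 1 3
  have f23 := f 2 3
  have w0 := w 0 1 2
  have w1 := w 1 2 0
  have w2 := w 2 0 1
  have b0 := b 3 0
  have b1 := b 3 1
  have b2 := b 3 2
  have p00 := p 0 0
  have p01 := p 0 1
  have p02 := p 0 2
  have p03 := p 0 3
  have p10 := p 1 0
  have p11 := p 1 1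
  have p12 := p 1 2
  have p13 := p 1 3
  have p20 := p 2 0
  have p21 := p 2 1
  have p22 := p 2 2
  have p23 := p 2 3
  have p33 := p 3 3
  simp only [kwDensity] at h
  have F01 := zf 0 1 (by linarith)
  have F20 := zf 2 0 (by linarith)
  have F12 := zf 1 2 (by linarith)
  have F03 := zf 0 3 (by linarith)
  have F13 := zf 1 3 (by linarith)
  have F23 := zf 2 3 (by linarith)
  have Fd : ∀ i, curv A i i x = 0 := fun i => by simp [curv]
  have Fs : ∀ {i j}, curv A i j x = 0 → curv A j i x = 0 := fun {i j} h => by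
    rw [curv_swap A i j, h, neg_zero]
  refine ⟨?_, ?_, ?_, ?_, zw 0 1 2 (by linarith), zw 1 2 0 (by linarith), zw 2 0 1 (by linarith)⟩
  · intro i j
    fin_cases i <;> fin_cases j
    exacts [Fd 0, F01, Fs F20, F03, Fs F01, Fd 1, F12, F13, F20, Fs F12, Fd 2, F23,
      Fs F03, Fs F13, Fs F23, Fd 3]
  · intro i
    fin_cases i
    exacts [zp 0 3 (by linarith), zp 1 3 (by linarith), zp 2 3 (by linarith),
      zp 3 3 (by linarith)]
  · intro a
    fin_cases a
    exacts [zb 3 0 (by linarith), zb 3 1 (by linarith), zb 3 2 (by linarith)]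
  · intro a c
    fin_cases a <;> fin_cases c
    exacts [zp 0 0 (by linarith), zp 0 1 (by linarith), zp 0 2 (by linarith),
      zp 1 0 (by linarith), zp 1 1 (by linarith), zp 1 2 (by linarith),
      zp 2 0 (by linarith), zp 2 1 (by linarith), zp 2 2 (by linarith)]

lemma kwDensity_nonneg {x : Fin 4 → ℝ}
    (hF : ∀ i j, (curv A i j x)ᴴ = -curv A i j x)
    (hD : ∀ i j, (covD A φ i j x)ᴴ = -covD A φ i j x)
    (hB : ∀ i j, (brk φ i j x)ᴴ = -brk φ i j x) : 0 ≤ kwDensity A φ x := by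
  have hW : ∀ i j k, (covD A φ 3 i x + brk φ j k x)ᴴ = -(covD A φ 3 i x + brk φ j k x) :=
    fun i j k => by rw [Matrix.conjTranspose_add, hD, hB, neg_add]
  have f := fun i j => ip_self_nonneg (hF i j)
  have p := fun i j => ip_self_nonneg (hD i j)
  have b := fun i j => ip_self_nonneg (hB i j)
  have w := fun i j k => ip_self_nonneg (hW i j k)
  simp only [kwDensity]
  linarith [f 0 1, f 2 0, f 1 2, f 0 3, f 1 3, f 2 3, w 0 1 2, w 1 2 0, w 2 0 1, b 3 0, b 3 1,
    b 3 2, p 0 0, p 0 1, p 0 2, p 0 3, p 1 0, p 1 1, p 1 2, p 1 3, p 2 0, p 2 1, p 2 2, p 2 3,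
    p 3 3]

/-- A skew-Hermitian field which is covariantly constant in the normal direction and vanishes at
the boundary is zero. -/
lemma eq_zero_of_covariantly_constant {f : (Fin 4 → ℝ) → Matrix (Fin n) (Fin n) ℂ}
    (hf : ContDiffOn ℝ (⊤ : ℕ∞) f halfSpace) (hskew : ∀ x : Fin 4 → ℝ, 0 < x 3 → (f x)ᴴ = -f x)
    (hD : ∀ x : Fin 4 → ℝ, 0 < x 3 → adD A 3 f x = 0) {C p : ℝ} (hp : 0 < p)
    (hb : ∀ x : Fin 4 → ℝ, 0 < x 3 → frob (f x) ≤ C * x 3 ^ p) {x : Fin 4 → ℝ} (hx : 0 < x 3) :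
    f x = 0 := by
  set g : ℝ → ℝ := fun s => ip (f (Function.update x 3 s)) (f (Function.update x 3 s)) with hg
  have hpos : ∀ s : ℝ, 0 < s → 0 < Function.update x 3 s 3 := fun s hs => by simpa using hs
  have hder : ∀ s ∈ Ioi (0 : ℝ), HasDerivAt g 0 s := fun s hs => by
    have h := hasDerivAt_ip A (hpos s hs) hf hf 3
    simpa [hD _ (hpos s hs), ip_zero_left, ip_comm _ 0] using h
  have hconst : ∀ s : ℝ, 0 < s → g s = ip (f x) (f x) := fun s hs => by
    have h := isOpen_Ioi.is_const_of_deriv_eq_zero isPreconnected_Ioi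
      (fun s hs => (hder s hs).differentiableAt.differentiableWithinAt)
      (fun s hs => (hder s hs).deriv) (mem_Ioi.2 hs) (mem_Ioi.2 hx)
    simpa [hg] using h
  have hle : ∀ s : ℝ, 0 < s → ip (f x) (f x) ≤ (C * s ^ p) ^ 2 := fun s hs => by
    rw [← hconst s hs, hg]
    simp only
    rw [ip_self_eq_frob_sq (hskew _ (hpos s hs))]
    have h := hb _ (hpos s hs)
    rw [Function.update_self] at h
    exact pow_le_pow_left₀ (frob_nonneg _) h 2
  have hlim : Tendsto (fun s : ℝ => (C * s ^ p) ^ 2) (𝓝[>] 0) (𝓝 0) := by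
    have h : ContinuousAt (fun s : ℝ => (C * s ^ p) ^ 2) 0 :=
      (continuousAt_const.mul (Real.continuousAt_rpow_const 0 p (Or.inr hp.le))).pow 2
    simpa [ContinuousAt, Real.zero_rpow hp.ne'] using h.mono_left nhdsWithin_le_nhds
  refine eq_zero_of_ip_self (hskew x hx) (le_antisymm ?_ (ip_self_nonneg (hskew x hx)))
  exact ge_of_tendsto hlim (eventually_mem_nhdsWithin.mono hle)

end vanishing

lemma half_smul_sum_eps3_smul_bracket {n : ℕ} (X : Fin 3 → Matrix (Fin n) (Fin n) ℂ) (a : Fin 3) :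
    (1 / 2 : ℂ) • ∑ b, ∑ c, eps3 a b c • (X b * X c - X c * X b) =
      X (a + 1) * X (a + 2) - X (a + 2) * X (a + 1) := by
  have h : a = 0 ∨ a = 1 ∨ a = 2 := by omega
  rcases h with rfl | rfl | rfl <;> simp only [Fin.sum_univ_three, eps3, Fin.reduceAdd] <;>
    norm_num <;> module

/-- Uniqueness of the Nahm pole solution on the half-space: a smooth skew-Hermitian
solution of the KW equations on `{x₄ > 0}` which is asymptotic (at the stated rates) to
the Nahm pole solution `A = 0`, `φ = Σ t_a dxᵃ/y` as `y → 0` and at infinity is flat,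
has `φ₄ = 0` with `φ₄` covariantly constant, has `φ_a` covariantly constant in the
boundary directions, and solves Nahm's equations in `y`; i.e. it is the Nahm pole
solution up to gauge. -/
theorem nahm_pole_uniqueness {n : ℕ} (t : Fin 3 → Matrix (Fin n) (Fin n) ℂ)
    (h12 : t 0 * t 1 - t 1 * t 0 = t 2)
    (h23 : t 1 * t 2 - t 2 * t 1 = t 0)
    (h31 : t 2 * t 0 - t 0 * t 2 = t 1)
    (htskew : ∀ a, (t a)ᴴ = -t a)
    (A φ : (Fin 4 → ℝ) → Fin 4 → Matrix (Fin n) (Fin n) ℂ)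
    (hAsmooth : ∀ i, ContDiffOn ℝ (⊤ : ℕ∞) (fun x => A x i) {x | 0 < x 3})
    (hφsmooth : ∀ i, ContDiffOn ℝ (⊤ : ℕ∞) (fun x => φ x i) {x | 0 < x 3})
    (hAskew : ∀ x : Fin 4 → ℝ, 0 < x 3 → ∀ i, (A x i)ᴴ = -A x i)
    (hφskew : ∀ x : Fin 4 → ℝ, 0 < x 3 → ∀ i, (φ x i)ᴴ = -φ x i)
    (hKW1 : ∀ x : Fin 4 → ℝ, 0 < x 3 → ∀ i j : Fin 4,
      curv A i j x - (φ x i * φ x j - φ x j * φ x i)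
        + ∑ k, ∑ l, eps4 i j k l • covD A φ k l x = 0)
    (hKW2 : ∀ x : Fin 4 → ℝ, 0 < x 3 → ∑ i, covD A φ i i x = 0)
    (C : ℝ) (hC : 0 < C) (δ : ℝ) (hδ0 : 0 < δ) (hδ1 : δ < 1)
    (ha : ∀ x : Fin 4 → ℝ, 0 < x 3 → ∀ a : Fin 3,
      frob (φ x (sp a) - ((x 3 : ℂ))⁻¹ • t a)
        ≤ C * min ((x 3) ^ δ) ((nrm x) ^ (-(1 + δ))))
    (hb : ∀ x : Fin 4 → ℝ, 0 < x 3 →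
      frob (φ x 3) ≤ C * (x 3) ^ (1 + δ) * (1 + nrm x) ^ (-(3 + 2 * δ)))
    (hc : ∀ x : Fin 4 → ℝ, 0 < x 3 → ∀ a b : Fin 3,
      frob (curv A (sp a) (sp b) x)
        ≤ C * min ((x 3) ^ (1 + δ)) ((nrm x) ^ (-(2 + δ))))
    (hd : ∀ x : Fin 4 → ℝ, 0 < x 3 → ∀ a b : Fin 3,
      frob (covD A φ (sp a) (sp b) x)
        ≤ C * min ((x 3) ^ δ) ((nrm x) ^ (-(2 + δ))))
    (he1 : ∀ x : Fin 4 → ℝ, 0 < x 3 → ∀ a : Fin 3,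
      frob (covD A φ (sp a) 3 x)
        ≤ C * min ((x 3) ^ (1 + δ)) ((nrm x) ^ (-(2 + δ))))
    (he2 : ∀ x : Fin 4 → ℝ, 0 < x 3 →
      frob (covD A φ 3 3 x) ≤ C * min ((x 3) ^ δ) ((nrm x) ^ (-(2 + δ))))
    (hf : ∀ x : Fin 4 → ℝ, 0 < x 3 → ∀ a : Fin 3,
      frob (covD A φ 3 (sp a) x + (((x 3 : ℂ)) ^ 2)⁻¹ • t a)
        ≤ C * min 1 ((nrm x) ^ (-(2 + δ)))) :
    ∀ x : Fin 4 → ℝ, 0 < x 3 →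
      (∀ i j : Fin 4, curv A i j x = 0)
      ∧ φ x 3 = 0
      ∧ (∀ i : Fin 4, covD A φ i 3 x = 0)
      ∧ (∀ a : Fin 3, φ x 3 * φ x (sp a) - φ x (sp a) * φ x 3 = 0)
      ∧ (∀ a b : Fin 3, covD A φ (sp a) (sp b) x = 0)
      ∧ (∀ a : Fin 3,
          covD A φ 3 (sp a) x + (1 / 2 : ℂ) •
            ∑ b, ∑ c, eps3 a b c •
              (φ x (sp b) * φ x (sp c) - φ x (sp c) * φ x (sp b)) = 0) := by

  have hF := fun (x : Fin 4 → ℝ) (hx : 0 < x 3) => conjTranspose_curv hAsmooth hAskew hx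
  have hD := fun (x : Fin 4 → ℝ) (hx : 0 < x 3) => conjTranspose_covD hφsmooth hAskew hφskew hx
  have hB : ∀ x : Fin 4 → ℝ, 0 < x 3 → ∀ i j, (brk φ i j x)ᴴ = -brk φ i j x :=
    fun x hx i j => conjTranspose_bracket (hφskew x hx i) (hφskew x hx j)
  set K := C + ∑ a, frob (t a) with hKdef
  have hCK : C ≤ K := le_add_of_nonneg_right (Finset.sum_nonneg fun a _ => frob_nonneg _)
  have hK : 0 ≤ K := hC.le.trans hCK
  have hφK : ∀ x : Fin 4 → ℝ, 0 < x 3 → ∀ a : Fin 3, frob (φ x (sp a)) ≤ K / x 3 := by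
    intro x hx a
    have h1 := frob_add_le (φ x (sp a) - ((x 3 : ℂ))⁻¹ • t a) (((x 3 : ℂ))⁻¹ • t a)
    rw [sub_add_cancel, frob_smul, norm_inv, Complex.norm_real, Real.norm_of_nonneg hx.le] at h1
    have h2 := min_rpow_le_rpow_neg hx (apply_three_le_nrm x) hδ0 hδ0.le zero_le_one
    rw [Real.rpow_neg_one] at h2
    have h3 : frob (t a) ≤ ∑ a, frob (t a) :=
      Finset.single_le_sum (fun a _ => frob_nonneg (t a)) (Finset.mem_univ a)
    calc frob (φ x (sp a)) ≤ C * (x 3)⁻¹ + (x 3)⁻¹ * ∑ a, frob (t a) :=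
          h1.trans (add_le_add ((ha x hx a).trans (by gcongr)) (by gcongr))
      _ = K / x 3 := by rw [hKdef]; ring
  have hzero : ∀ x : Fin 4 → ℝ, 0 < x 3 → kwDensity A φ x = 0 := by
    intro x hx
    refine density_eq_zero_of_decay (J := kwCurrent A φ) (K := 14 * (K ^ 2 + K ^ 3)) hδ0 hδ1
      (by positivity)
      (fun i => (contDiffOn_kwCurrent hAsmooth hφsmooth i).differentiableOn (by simp))
      (contDiffOn_kwDensity hAsmooth hφsmooth).continuousOn
      (fun x hx => kwDensity_nonneg (hF x hx) (hD x hx) (hB x hx))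
      (fun x hx => divergence_kwCurrent hAsmooth hφsmooth hx (hKW1 x hx) (hKW2 x hx))
      ?_ ?_ x hx
    · intro x hx i hi
      have hr := apply_three_le_nrm x
      have hm : 0 ≤ min (x 3 ^ δ) (nrm x ^ (-(2 + δ))) :=
        le_min (Real.rpow_nonneg hx.le _) (Real.rpow_nonneg (hx.le.trans hr) _)
      have hCm : C * min (x 3 ^ δ) (nrm x ^ (-(2 + δ))) ≤
          K * min (x 3 ^ δ) (nrm x ^ (-(2 + δ))) := by gcongr
      refine abs_kwCurrent_side_le hx hm hK (hφK x hx) ?_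
        (min_rpow_le_rpow_neg hx hr hδ0 hδ0.le zero_le_two) ?_
        (fun a b => (hd x hx a b).trans hCm) ((he2 x hx).trans hCm) (hKW1 x hx) (hKW2 x hx) hi
      · refine (hb x hx).trans ?_
        rw [mul_assoc]
        exact mul_le_mul hCK (rpow_mul_rpow_le_mul_min hx hr hδ0)
          (mul_nonneg (Real.rpow_nonneg hx.le _)
            (Real.rpow_nonneg (by linarith [hx.le.trans hr]) _)) hK
      · exact fun a b => ((hc x hx a b).trans (by
          gcongr ?_ * ?_; exact min_rpow_one_add_le hx hr hδ0)).trans hCm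
    · intro x hx
      have hm : 0 ≤ min (x 3 ^ (1 + δ)) (nrm x ^ (-(2 + δ))) :=
        le_min (Real.rpow_nonneg hx.le _)
          (Real.rpow_nonneg (hx.le.trans (apply_three_le_nrm x)) _)
      have hCm : C * min (x 3 ^ (1 + δ)) (nrm x ^ (-(2 + δ))) ≤
          K * min (x 3 ^ (1 + δ)) (nrm x ^ (-(2 + δ))) := by gcongr
      refine (abs_kwCurrent_normal_le (hφK x hx) (fun a b => (hc x hx a b).trans hCm)
        (fun a => (he1 x hx a).trans hCm)).trans ?_
      gcongr ?_ * _ / _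
      nlinarith [pow_nonneg hK 3, pow_nonneg hK 2]
  have hall := fun (x : Fin 4 → ℝ) (hx : 0 < x 3) =>
    eq_zero_of_kwDensity_eq_zero (hF x hx) (hD x hx) (hB x hx) (hzero x hx)
  intro x hx
  obtain ⟨hcurv, hD3, hbrk, hDab, hN0, hN1, hN2⟩ := hall x hx
  refine ⟨hcurv, ?_, hD3, hbrk, hDab, ?_⟩
  · refine eq_zero_of_covariantly_constant (A := A) (C := C) (p := 1 + δ) (hφsmooth 3)
      (fun x hx => hφskew x hx 3) (fun x hx => (hall x hx).2.1 3) (by linarith) ?_ hx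
    intro x hx
    have hr : 0 ≤ nrm x := hx.le.trans (apply_three_le_nrm x)
    exact (hb x hx).trans (mul_le_of_le_one_right
      (mul_nonneg hC.le (Real.rpow_nonneg hx.le _))
      (Real.rpow_le_one_of_one_le_of_nonpos (by linarith) (by linarith)))
  · intro a
    rw [half_smul_sum_eps3_smul_bracket fun a => φ x (sp a)]
    fin_cases a
    exacts [hN0, hN1, hN2]
end
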